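/- arXiv:1707.00518 — 4 statements merged into one kernel-verified Lean document; each statement's English description precedes it below -/
import Mathlib

section
/- Lagrangian flux representation for compressible flows (donating region theorem, parametrized form). Let n ≥ 2, let v : ℝ × ℝⁿ → ℝⁿ be a C¹ time-dependent vector field with a jointly C¹ two-parameter flow φ, and let ρ : ℝ × ℝⁿ → ℝ be a C¹ solution of the conservation law ∂_tρ + div_x(ρ v) = 0. Let K ⊂ ℝ^{n−1} be compact and measurable, γ : ℝ^{n−1} → ℝⁿ a C¹ map injective on K, and ν : ℝ^{n−1} → ℝⁿ a continuous unit normal field along γ, i.e. ‖ν(s)‖ = 1, ⟨ν(s), ∂_iγ(s)⟩ = 0 for i = 1,…,n−1, and det[ν(s), ∂_1γ(s), …, ∂_{n−1}γ(s)] > 0 for all s ∈ K (so this determinant equals the surface area element of the hypersurface C = γ(K), and ν prescribes the direction of positive flux). Fix τ > 0 and define the crossing map Ψ : K × [0,τ] → ℝⁿ by Ψ(s,t) = φ_t^0(γ(s)) (the time-0 position of the particle occupying γ(s) at time t). Assume that for Lebesgue-a.e. p ∈ ℝⁿ the fiber Ψ^{−1}({p}) is finite and consists only of points at which the n×n Jacobian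 DΨ (in the variables (s,t)) is invertible, define deg(Ψ,p) := Σ_{(s,t) ∈ Ψ^{−1}({p})} sgn det DΨ(s,t), and assume p ↦ ρ(0,p)·deg(Ψ,p) is Lebesgue integrable on ℝⁿ and (s,t) ↦ ρ(t,γ(s))⟨v(t,γ(s)),ν(s)⟩det[ν(s),∂_1γ(s),…,∂_{n−1}γ(s)] is integrable on K × [0,τ]. Then ∫_0^τ ∫_K ρ(t,γ(s)) ⟨v(t,γ(s)), ν(s)⟩ det[ν(s), ∂_1γ(s), …, ∂_{n−1}γ(s)] ds dt = (−1)ⁿ ∫_{ℝⁿ} ρ(0,p) · deg(Ψ,p) dp. -/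
open MeasureTheory
open scoped RealInnerProductSpace

theorem Matrix.hasDerivAt_det_of_eq_one {n : Type*} [Fintype n] [DecidableEq n]
    {M : ℝ → Matrix n n ℝ} {B : Matrix n n ℝ} {t₀ : ℝ} (h1 : M t₀ = 1)
    (hM : ∀ i j, HasDerivAt (fun t => M t i j) (B i j) t₀) :
    HasDerivAt (fun t => (M t).det) B.trace t₀ := by
  set D : (n → n → ℝ) → ℝ := fun x => (Matrix.of x).det with hD
  have hdiff : Differentiable ℝ D := by
    simp only [hD, Matrix.det_apply, Matrix.of_apply]
    fun_prop
  have along {N : ℝ → n → n → ℝ} {s : ℝ} (h1 : N s = (1 : Matrix n n ℝ))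
      (hN : ∀ i j, HasDerivAt (fun t => N t i j) (B i j) s) :
      HasDerivAt (fun t => D (N t)) (fderiv ℝ D (1 : Matrix n n ℝ) B) s := by
    have hN' : HasDerivAt N B s := hasDerivAt_pi.2 fun i => hasDerivAt_pi.2 fun j => hN i j
    have h := (hdiff (N s)).hasFDerivAt.comp_hasDerivAt s hN'
    rwa [h1] at h
  have line : HasDerivAt (fun t : ℝ => (1 + t • B).det)
      (fderiv ℝ D (1 : Matrix n n ℝ) B) 0 := by
    refine along (N := fun t => (1 + t • B : Matrix n n ℝ))
      (by simp only [zero_smul, add_zero]; rfl) fun i j => ?_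
    simp only [Matrix.add_apply, Matrix.smul_apply, smul_eq_mul]
    simpa using ((hasDerivAt_id (0 : ℝ)).mul_const (B i j)).const_add ((1 : Matrix n n ℝ) i j)
  have line' : HasDerivAt (fun t : ℝ => (1 + t • B).det) B.trace 0 := by
    rw [funext fun t : ℝ => Matrix.det_one_add_smul t B]
    have hp := (Polynomial.hasDerivAt
      (Matrix.det (1 + (Polynomial.X : Polynomial ℝ) • B.map Polynomial.C)).divX.divX 0).mul
        ((hasDerivAt_id (0 : ℝ)).pow 2)
    exact ((((hasDerivAt_id (0 : ℝ)).const_mul B.trace).const_add 1).add hp).congr_deriv (by simp)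
  rw [← line.unique line']
  exact along h1 hM

theorem ContinuousLinearMap.hasDerivAt_det {E : Type*} [NormedAddCommGroup E] [NormedSpace ℝ E]
    [FiniteDimensional ℝ E] {M : ℝ → E →L[ℝ] E} {B N : E →L[ℝ] E} {t₀ : ℝ}
    (hN : M t₀ ∘L N = .id ℝ E) (hM : HasDerivAt M (B ∘L M t₀) t₀) :
    HasDerivAt (fun t => (M t).det) (LinearMap.trace ℝ E B * (M t₀).det) t₀ := by
  let b := Module.finBasis ℝ E
  have hN' : N ∘L M t₀ = .id ℝ E := by
    have h : (M t₀ : E →ₗ[ℝ] E) * (N : E →ₗ[ℝ] E) = 1 :=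
      congrArg (fun L : E →L[ℝ] E => (L : E →ₗ[ℝ] E)) hN
    have := mul_eq_one_comm.1 h
    ext x
    exact LinearMap.congr_fun this x
  have hP : HasDerivAt (fun t => M t ∘L N) B t₀ := by
    have h := hM.clm_comp (hasDerivAt_const t₀ N)
    simpa [ContinuousLinearMap.comp_assoc, hN] using h
  have hdet : HasDerivAt (fun t => (LinearMap.toMatrix b b (M t ∘L N : E →L[ℝ] E)).det)
      (LinearMap.toMatrix b b (B : E →ₗ[ℝ] E)).trace t₀ := by
    refine Matrix.hasDerivAt_det_of_eq_one ?_ fun i j => ?_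
    · rw [hN]; simp
    · simp only [LinearMap.toMatrix_apply]
      exact ((b.coord i).toContinuousLinearMap.hasFDerivAt.comp_hasDerivAt t₀
        (hP.clm_apply (hasDerivAt_const t₀ (b j)))).congr_deriv (by simp)
  rw [LinearMap.trace_eq_matrix_trace ℝ b]
  refine (hdet.mul_const _).congr_of_eventuallyEq (.of_forall fun t => ?_)
  simp only [LinearMap.det_toMatrix, ContinuousLinearMap.det]
  rw [← LinearMap.det_comp]
  congr 1
  ext x
  simpa using congrArg (M t) (DFunLike.congr_fun hN' x).symm

/-- The variational equation for the spatial derivative of a jointly `C¹` flow. -/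
theorem hasDerivAt_fderiv_flow {E : Type*} [NormedAddCommGroup E] [NormedSpace ℝ E]
    [FiniteDimensional ℝ E] {v : ℝ → E → E} (hv : ContDiff ℝ 1 fun q : ℝ × E => v q.1 q.2)
    {ψ : ℝ → E → E} (hψ : ContDiff ℝ 1 fun q : ℝ × E => ψ q.1 q.2)
    (hψ' : ∀ t x, HasDerivAt (fun s => ψ s x) (v t (ψ t x)) t) (t : ℝ) (x : E) :
    HasDerivAt (fun s => fderiv ℝ (ψ s) x) (fderiv ℝ (v t) (ψ t x) ∘L fderiv ℝ (ψ t) x) t := by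
  have hw : ContDiff ℝ 1 fun q : ℝ × E => v q.1 (ψ q.1 q.2) :=
    hv.comp (contDiff_fst.prodMk hψ)
  have hcont : Continuous fun q : ℝ × E => fderiv ℝ (fun y => v q.1 (ψ q.1 y)) q.2 :=
    (ContDiff.fderiv (f := fun (q : ℝ × E) y => v q.1 (ψ q.1 y)) (m := 1) (n := 0)
      (hw.comp ((contDiff_fst.comp contDiff_fst).prodMk contDiff_snd)) contDiff_snd
      (by simp)).continuous
  have hd {w : ℝ → E → E} (hw : ContDiff ℝ 1 fun q : ℝ × E => w q.1 q.2) (s : ℝ) :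
      Differentiable ℝ (w s) :=
    (hw.comp (contDiff_const.prodMk contDiff_id) : ContDiff ℝ 1 (w s)).differentiable one_ne_zero
  have hint : ∀ s, fderiv ℝ (ψ s) x =
      fderiv ℝ (ψ 0) x + ∫ r in (0 : ℝ)..s, fderiv ℝ (fun y => v r (ψ r y)) x := by
    intro s
    have hftc : ψ s = fun y => ψ 0 y + ∫ r in (0 : ℝ)..s, v r (ψ r y) := by
      ext1 y
      rw [intervalIntegral.integral_eq_sub_of_hasDerivAt (fun r _ => hψ' r y)
        ((hw.continuous.comp (continuous_id.prodMk continuous_const)).intervalIntegrable _ _)]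
      abel
    obtain ⟨C, hC⟩ := ((isCompact_uIcc (a := (0 : ℝ)) (b := s)).prod
      (isCompact_closedBall x 1)).exists_bound_of_continuousOn hcont.continuousOn
    have hpar := intervalIntegral.hasFDerivAt_integral_of_dominated_of_fderiv_le
      (μ := MeasureTheory.volume) (𝕜 := ℝ) (a := 0) (b := s) (x₀ := x) (s := Metric.closedBall x 1)
      (F := fun y r => v r (ψ r y)) (F' := fun y r => fderiv ℝ (fun y => v r (ψ r y)) y)
      (bound := fun _ => C) (Metric.closedBall_mem_nhds x one_pos)
      (.of_forall fun y =>
        (hw.continuous.comp (continuous_id.prodMk continuous_const)).aestronglyMeasurable)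
      ((hw.continuous.comp (continuous_id.prodMk continuous_const)).intervalIntegrable _ _)
      (hcont.comp (continuous_id.prodMk continuous_const)).aestronglyMeasurable
      (.of_forall fun r hr y hy => hC (r, y) ⟨Set.uIoc_subset_uIcc hr, hy⟩)
      intervalIntegrable_const
      (.of_forall fun r _ y _ => (hd (w := fun r y => v r (ψ r y)) hw r y).hasFDerivAt)
    have h := (hd hψ 0 x : DifferentiableAt ℝ (ψ 0) x).hasFDerivAt.add hpar
    exact (h.congr_of_eventuallyEq (.of_forall fun y => congrFun hftc y)).fderiv
  have hchain : fderiv ℝ (fun y => v t (ψ t y)) x =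
      fderiv ℝ (v t) (ψ t x) ∘L fderiv ℝ (ψ t) x :=
    fderiv_comp x (hd hv t _) (hd hψ t x)
  rw [funext hint, ← hchain]
  exact (intervalIntegral.integral_hasDerivAt_right
    ((hcont.comp (continuous_id.prodMk continuous_const)).intervalIntegrable _ _)
    ((hcont.comp (continuous_id.prodMk continuous_const)).stronglyMeasurableAtFilter _ _)
    (hcont.comp (continuous_id.prodMk continuous_const)).continuousAt).const_add _

theorem fderiv_flow_comp_fderiv_flow {E : Type*} [NormedAddCommGroup E] [NormedSpace ℝ E]
    {φ : ℝ → ℝ → E → E} (hφ : ContDiff ℝ 1 fun q : ℝ × ℝ × E => φ q.1 q.2.1 q.2.2)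
    (hφid : ∀ a x, φ a a x = x) (hφcomp : ∀ a b c x, φ b c (φ a b x) = φ a c x)
    (a b : ℝ) (x : E) :
    fderiv ℝ (φ b a) (φ a b x) ∘L fderiv ℝ (φ a b) x = .id ℝ E := by
  have hd : ∀ a b, Differentiable ℝ (φ a b) := fun a b =>
    (hφ.comp (contDiff_const.prodMk (contDiff_const.prodMk contDiff_id)) :
      ContDiff ℝ 1 (φ a b)).differentiable one_ne_zero
  rw [← fderiv_comp x (hd b a _) (hd a b x)]
  have : φ b a ∘ φ a b = id := by
    ext1 y
    simp [hφcomp, hφid]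
  rw [this, fderiv_id]

/-- Lagrangian mass conservation: the density multiplied by the Jacobian determinant of the flow
is constant along trajectories. -/
theorem density_mul_det_fderiv_flow {n : ℕ}
    {v : ℝ → EuclideanSpace ℝ (Fin n) → EuclideanSpace ℝ (Fin n)}
    (hv : ContDiff ℝ 1 fun q : ℝ × EuclideanSpace ℝ (Fin n) => v q.1 q.2)
    {φ : ℝ → ℝ → EuclideanSpace ℝ (Fin n) → EuclideanSpace ℝ (Fin n)}
    (hφC1 : ContDiff ℝ 1 fun q : ℝ × ℝ × EuclideanSpace ℝ (Fin n) => φ q.1 q.2.1 q.2.2)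
    (hφid : ∀ a x, φ a a x = x)
    (hφ' : ∀ a b x, HasDerivAt (fun s => φ a s x) (v b (φ a b x)) b)
    (hφcomp : ∀ a b c x, φ b c (φ a b x) = φ a c x)
    {ρ : ℝ → EuclideanSpace ℝ (Fin n) → ℝ}
    (hρ : ContDiff ℝ 1 fun q : ℝ × EuclideanSpace ℝ (Fin n) => ρ q.1 q.2)
    (hcons : ∀ t x, deriv (fun s => ρ s x) t
      + ∑ i : Fin n, fderiv ℝ (fun y => ρ t y * v t y i) x (EuclideanSpace.single i 1) = 0)
    (a t : ℝ) (x : EuclideanSpace ℝ (Fin n)) :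
    ρ t (φ a t x) * (fderiv ℝ (φ a t) x).det = ρ a x := by
  have hψ : ContDiff ℝ 1 fun q : ℝ × EuclideanSpace ℝ (Fin n) => φ a q.1 q.2 :=
    hφC1.comp (contDiff_const.prodMk contDiff_id)
  have hderiv : ∀ t, HasDerivAt (fun t => ρ t (φ a t x) * (fderiv ℝ (φ a t) x).det) 0 t := by
    intro t
    set y := φ a t x with hy
    have hvt : Differentiable ℝ (v t) :=
      (hv.comp (contDiff_const.prodMk contDiff_id) : ContDiff ℝ 1 (v t)).differentiable one_ne_zero
    have hρt : Differentiable ℝ (ρ t) :=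
      (hρ.comp (contDiff_const.prodMk contDiff_id) : ContDiff ℝ 1 (ρ t)).differentiable one_ne_zero
    have hdet := ContinuousLinearMap.hasDerivAt_det
      (N := fderiv ℝ (φ t a) y)
      (by simpa [hy, hφcomp, hφid] using fderiv_flow_comp_fderiv_flow hφC1 hφid hφcomp t a y)
      (hasDerivAt_fderiv_flow hv hψ (hφ' a) t x)
    have hρq : HasFDerivAt (fun q : ℝ × EuclideanSpace ℝ (Fin n) => ρ q.1 q.2)
        (fderiv ℝ (fun q : ℝ × EuclideanSpace ℝ (Fin n) => ρ q.1 q.2) (t, y)) (t, y) :=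
      (hρ.differentiable one_ne_zero (t, y)).hasFDerivAt
    set R := fderiv ℝ (fun q : ℝ × EuclideanSpace ℝ (Fin n) => ρ q.1 q.2) (t, y)
    have hρ1 : deriv (fun s => ρ s y) t = R (1, 0) :=
      (HasFDerivAt.comp_hasDerivAt (f := fun s => (s, y)) t hρq
        ((hasDerivAt_id t).prodMk (hasDerivAt_const t y))).deriv
    have hρ2 : ∀ w, fderiv ℝ (ρ t) y w = R (0, w) := by
      intro w
      have h : HasFDerivAt (ρ t) _ y :=
        hρq.comp y ((hasFDerivAt_const t y).prodMk (hasFDerivAt_id y))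
      rw [h.fderiv]
      simp
    have hρφ : HasDerivAt (fun s => ρ s (φ a s x)) (R (1, v t y)) t :=
      HasFDerivAt.comp_hasDerivAt (f := fun s => (s, φ a s x)) t hρq
        ((hasDerivAt_id t).prodMk (hφ' a t x))
    have hRv : R (1, v t y) = R (1, 0) + ∑ i, v t y i * R (0, EuclideanSpace.single i 1) := by
      have h1 : ((1 : ℝ), v t y) = (1, 0) + (0, v t y) := by simp
      rw [h1, map_add, ← hρ2]
      congr 1
      conv_lhs => rw [← (EuclideanSpace.basisFun (Fin n) ℝ).sum_repr (v t y)]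
      simp only [map_sum, map_smul, EuclideanSpace.basisFun_repr, EuclideanSpace.basisFun_apply,
        smul_eq_mul]
      simp only [hρ2]
    have htr : LinearMap.trace ℝ _ (fderiv ℝ (v t) y : _ →ₗ[ℝ] EuclideanSpace ℝ (Fin n)) =
        ∑ i, fderiv ℝ (v t) y (EuclideanSpace.single i 1) i := by
      rw [LinearMap.trace_eq_matrix_trace ℝ (EuclideanSpace.basisFun (Fin n) ℝ).toBasis,
        Matrix.trace]
      simp [LinearMap.toMatrix_apply]
    have hdiv : ∀ i, fderiv ℝ (fun y => ρ t y * v t y i) y (EuclideanSpace.single i 1) =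
        ρ t y * fderiv ℝ (v t) y (EuclideanSpace.single i 1) i
          + v t y i * R (0, EuclideanSpace.single i 1) := by
      intro i
      have hvi : HasFDerivAt (fun y => v t y i)
          (EuclideanSpace.proj (𝕜 := ℝ) i ∘L fderiv ℝ (v t) y) y :=
        (EuclideanSpace.proj (𝕜 := ℝ) i : EuclideanSpace ℝ (Fin n) →L[ℝ] ℝ).hasFDerivAt.comp y
          (hvt y).hasFDerivAt
      have h : HasFDerivAt (fun y => ρ t y * v t y i) _ y := (hρt y).hasFDerivAt.mul hvi
      rw [h.fderiv]
      simp [hρ2]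
    refine (hρφ.mul hdet).congr_deriv ?_
    have hc := hcons t y
    simp only [hdiv, Finset.sum_add_distrib, ← Finset.mul_sum, ← htr, hρ1] at hc
    rw [hRv]
    linear_combination (fderiv ℝ (φ a t) x).det * hc
  have hconst := is_const_of_deriv_eq_zero (fun t => (hderiv t).differentiableAt)
    (fun t => (hderiv t).deriv) t a
  have hid : φ a a = id := funext (hφid a)
  simpa [hid, ContinuousLinearMap.det] using hconst

theorem hasDerivAt_flow_initial_time {E : Type*} [NormedAddCommGroup E] [NormedSpace ℝ E]
    {v : ℝ → E → E} {φ : ℝ → ℝ → E → E}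
    (hφ : ContDiff ℝ 1 fun q : ℝ × ℝ × E => φ q.1 q.2.1 q.2.2) (hφid : ∀ a x, φ a a x = x)
    (hφ' : ∀ a b x, HasDerivAt (fun s => φ a s x) (v b (φ a b x)) b)
    (hφcomp : ∀ a b c x, φ b c (φ a b x) = φ a c x) (t b : ℝ) (x : E) :
    HasDerivAt (fun s => φ s b x) (-fderiv ℝ (φ t b) x (v t x)) t := by
  have hχ : ContDiff ℝ 1 fun q : ℝ × E => φ q.1 b q.2 :=
    hφ.comp (contDiff_fst.prodMk (contDiff_const.prodMk contDiff_snd))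
  have hq := (hχ.differentiable one_ne_zero (t, x)).hasFDerivAt
  set R := fderiv ℝ (fun q : ℝ × E => φ q.1 b q.2) (t, x)
  have htime : HasDerivAt (fun s => φ s b x) (R (1, 0)) t :=
    HasFDerivAt.comp_hasDerivAt (f := fun s => (s, x)) t hq
      ((hasDerivAt_id t).prodMk (hasDerivAt_const t x))
  have hspace : fderiv ℝ (φ t b) x (v t x) = R (0, v t x) := by
    have h : HasFDerivAt (𝕜 := ℝ) (φ t b) _ x :=
      hq.comp x ((hasFDerivAt_const t x).prodMk (hasFDerivAt_id x))
    rw [h.fderiv]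
    simp
  have htraj : HasDerivAt (fun s => φ s b (φ t s x)) (R (1, v t x)) t := by
    have hin : HasDerivAt (fun s => (s, φ t s x)) (1, v t x) t := by
      simpa [hφid] using (hasDerivAt_id t).prodMk (hφ' t t x)
    refine HasFDerivAt.comp_hasDerivAt (f := fun s => (s, φ t s x))
      (l := fun q : ℝ × E => φ q.1 b q.2) t ?_ hin
    simpa only [hφid] using hq
  simp only [hφcomp] at htraj
  have hzero : R (1, v t x) = 0 := htraj.unique (hasDerivAt_const t _)
  have hsplit : ((1 : ℝ), v t x) = (1, 0) + (0, v t x) := by simp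
  rw [hsplit, map_add] at hzero
  rwa [hspace, ← eq_neg_of_add_eq_zero_left hzero]

theorem exists_measurable_partition_injOn {E : Type*} [NormedAddCommGroup E] [NormedSpace ℝ E]
    [FiniteDimensional ℝ E] [MeasurableSpace E] [BorelSpace E]
    {s : Set E} (hs : MeasurableSet s) {f : E → E} {f' : E → E →L[ℝ] E}
    (hf' : ∀ x ∈ s, HasFDerivWithinAt f (f' x) s x) (hdet : ∀ x ∈ s, (f' x).det ≠ 0) :
    ∃ P : ℕ → Set E, Pairwise (Function.onFun Disjoint P) ∧ (∀ k, MeasurableSet (P k)) ∧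
      (⋃ k, P k) = s ∧ ∀ k, Set.InjOn f (P k) := by
  classical
  rcases s.eq_empty_or_nonempty with rfl | hne
  · exact ⟨fun _ => ∅, fun _ _ _ => by simp [Function.onFun], by simp, by simp, by simp⟩
  have key : ∀ A : E →L[ℝ] E, ∃ r : NNReal, r ≠ 0 ∧ (A.det ≠ 0 →
      ∀ t : Set E, ApproximatesLinearOn f A t r → Set.InjOn f t) := by
    intro A
    by_cases hA : A.det = 0
    · exact ⟨1, one_ne_zero, fun h => absurd hA h⟩
    have hcoe : ((A.toContinuousLinearEquivOfDetNeZero hA : E ≃L[ℝ] E) : E →L[ℝ] E) = A :=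
      ContinuousLinearMap.coe_toContinuousLinearEquivOfDetNeZero A hA
    obtain hE | hE := subsingleton_or_nontrivial E
    · exact ⟨1, one_ne_zero, fun _ t _ x _ y _ _ => Subsingleton.elim x y⟩
    set L := A.toContinuousLinearEquivOfDetNeZero hA
    have hpos : 0 < ‖(L.symm : E →L[ℝ] E)‖₊⁻¹ := inv_pos.2 L.nnnorm_symm_pos
    refine ⟨‖(L.symm : E →L[ℝ] E)‖₊⁻¹ / 2, (half_pos hpos).ne', fun _ t ht => ?_⟩
    rw [← hcoe] at ht
    exact ht.injOn (Or.inr (NNReal.half_lt_self hpos.ne'))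
  choose r hr0 hr using key
  obtain ⟨t, A, hdisj, hmeas, hcov, happ, hA⟩ :=
    exists_partition_approximatesLinearOn_of_hasFDerivWithinAt f s f' hf' r hr0
  refine ⟨fun k => s ∩ t k, fun i j hij => (hdisj hij).mono Set.inter_subset_right
    Set.inter_subset_right, fun k => hs.inter (hmeas k), ?_, fun k => ?_⟩
  · rw [← Set.inter_iUnion, Set.inter_eq_left.2 hcov]
  · obtain ⟨y, hy, hyA⟩ := hA hne k
    exact hr _ (hyA ▸ hdet y hy) _ (happ k)

/-- The signed area formula with multiplicity. -/
theorem integral_mul_det_eq_integral_mul_finsum_sign {E : Type*} [NormedAddCommGroup E]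
    [NormedSpace ℝ E] [FiniteDimensional ℝ E] [MeasurableSpace E] [BorelSpace E]
    (μ : Measure E) [μ.IsAddHaarMeasure] {s : Set E} (hs : MeasurableSet s)
    {f : E → E} {f' : E → E →L[ℝ] E} (hf' : ∀ x ∈ s, HasFDerivWithinAt f (f' x) s x)
    (hmeas : Measurable fun x => (f' x).det) (g : E → ℝ)
    (hint : IntegrableOn (fun x => g (f x) * (f' x).det) s μ)
    (hfib : ∀ᵐ p ∂μ, {x | x ∈ s ∧ f x = p}.Finite ∧ ∀ x ∈ s, f x = p → (f' x).det ≠ 0) :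
    ∫ x in s, g (f x) * (f' x).det ∂μ
      = ∫ p, g p * ∑ᶠ x ∈ {x | x ∈ s ∧ f x = p}, Real.sign (f' x).det ∂μ := by
  classical
  set s₀ := s ∩ {x | (f' x).det ≠ 0} with hs₀
  have hs₀m : MeasurableSet s₀ := hs.inter (hmeas (measurableSet_singleton 0).compl)
  have hf₀ : ∀ x ∈ s₀, HasFDerivWithinAt f (f' x) s₀ x := fun x hx =>
    (hf' x hx.1).mono Set.inter_subset_left
  obtain ⟨P, hPd, hPm, hPU, hPi⟩ := exists_measurable_partition_injOn hs₀m hf₀ fun x hx => hx.2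
  have hPs : ∀ k, P k ⊆ s₀ := fun k => hPU ▸ Set.subset_iUnion P k
  have hfP : ∀ k, ∀ x ∈ P k, HasFDerivWithinAt f (f' x) (P k) x := fun k x hx =>
    (hf₀ x (hPs k hx)).mono (hPs k)
  let G : ℕ → E → ℝ := fun k p => g p * Real.sign (f' (Function.invFunOn f (P k) p)).det
  have hG : ∀ k, ∀ x ∈ P k, G k (f x) = g (f x) * Real.sign (f' x).det := fun k x hx => by
    simp only [G, (hPi k).leftInvOn_invFunOn hx]
  have habs : ∀ x : ℝ, |x| * Real.sign x = x := fun x => by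
    rcases lt_trichotomy x 0 with h | rfl | h
    · simp [Real.sign_of_neg h, abs_of_neg h]
    · simp
    · simp [Real.sign_of_pos h, abs_of_pos h]
  have hGs : ∀ k, Set.EqOn (fun x => |(f' x).det| • G k (f x))
      (fun x => g (f x) * (f' x).det) (P k) := fun k x hx => by
    simp only [hG k x hx, smul_eq_mul]
    rw [mul_left_comm, habs]
  let F : ℕ → E → ℝ := fun k => (f '' P k).indicator (G k)
  have hfm : ∀ k, MeasurableSet (f '' P k) := fun k =>
    measurable_image_of_fderivWithin (hPm k) (hfP k) (hPi k)
  have hintP : ∀ k, IntegrableOn (fun x => g (f x) * (f' x).det) (P k) μ := fun k =>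
    hint.mono_set ((hPs k).trans Set.inter_subset_left)
  have hFint : ∀ k, Integrable (F k) μ := fun k => by
    rw [integrable_indicator_iff (hfm k),
      integrableOn_image_iff_integrableOn_abs_det_fderiv_smul μ (hPm k) (hfP k) (hPi k),
      integrableOn_congr_fun (hGs k) (hPm k)]
    exact hintP k
  have hFval : ∀ k, ∫ p, F k p ∂μ = ∫ x in P k, g (f x) * (f' x).det ∂μ := fun k => by
    rw [integral_indicator (hfm k),
      integral_image_eq_integral_abs_det_fderiv_smul μ (hPm k) (hfP k) (hPi k),
      setIntegral_congr_fun (hPm k) (hGs k)]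
  have hFnorm : ∀ k, ∫ p, ‖F k p‖ ∂μ = ∫ x in P k, ‖g (f x) * (f' x).det‖ ∂μ := fun k => by
    simp only [F, norm_indicator_eq_indicator_norm]
    rw [integral_indicator (hfm k),
      integral_image_eq_integral_abs_det_fderiv_smul μ (hPm k) (hfP k) (hPi k)]
    refine setIntegral_congr_fun (hPm k) fun x hx => ?_
    simp only [← hGs k hx, smul_eq_mul, norm_mul, Real.norm_eq_abs, abs_abs]
  have hintU : IntegrableOn (fun x => g (f x) * (f' x).det) (⋃ k, P k) μ :=
    hint.mono_set (hPU ▸ Set.inter_subset_left)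
  have hsum := hasSum_integral_of_summable_integral_norm hFint
    (by simpa only [hFnorm] using (hasSum_integral_iUnion hPm hPd hintU.norm).summable)
  simp only [hFval] at hsum
  have hLHS : ∫ x in s, g (f x) * (f' x).det ∂μ = ∫ x in s₀, g (f x) * (f' x).det ∂μ := by
    refine setIntegral_eq_of_subset_of_forall_sdiff_eq_zero hs Set.inter_subset_left ?_
    intro x hx
    have : (f' x).det = 0 := by
      by_contra h
      exact hx.2 ⟨hx.1, h⟩
    simp [this]
  rw [hLHS, ← hPU, (hasSum_integral_iUnion hPm hPd hintU).unique hsum]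
  refine integral_congr_ae ?_
  filter_upwards [hfib] with p hp
  obtain ⟨hfin, hnd⟩ := hp
  -- each fiber point lies in exactly one piece
  have hcover : ∀ x, (x ∈ s ∧ f x = p) ↔ ∃ k, x ∈ P k ∧ f x = p := by
    intro x
    rw [exists_and_right, ← Set.mem_iUnion, hPU]
    exact ⟨fun h => ⟨⟨h.1, hnd x h.1 h.2⟩, h.2⟩, fun h => ⟨h.1.1, h.2⟩⟩
  have hterm : ∀ k, F k p = ∑ x ∈ hfin.toFinset,
      (P k).indicator (fun x => g p * Real.sign (f' x).det) x := by
    intro k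
    by_cases hk : p ∈ f '' P k
    · obtain ⟨x, hx, rfl⟩ := hk
      rw [Finset.sum_eq_single x]
      · simp only [F]
        rw [Set.indicator_of_mem (Set.mem_image_of_mem f hx), Set.indicator_of_mem hx, hG k x hx]
      · intro y hy hyx
        refine Set.indicator_of_notMem (fun hyP => hyx ?_) _
        exact hPi k hyP hx (hfin.mem_toFinset.1 hy).2
      · exact fun h => absurd (hfin.mem_toFinset.2 ((hcover x).2 ⟨k, hx, rfl⟩)) h
    · simp only [F]
      rw [Set.indicator_of_notMem hk, Finset.sum_eq_zero]
      intro x hx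
      exact Set.indicator_of_notMem
        (fun hxP => hk ⟨x, hxP, (hfin.mem_toFinset.1 hx).2⟩) _
  change _ = g p * ∑ᶠ x ∈ {x | x ∈ s ∧ f x = p}, Real.sign (f' x).det
  rw [finsum_mem_eq_finite_toFinset_sum _ hfin, Finset.mul_sum]
  simp only [hterm]
  refine HasSum.tsum_eq (hasSum_sum fun x hx => ?_)
  obtain ⟨k, hxk, -⟩ := (hcover x).1 (hfin.mem_toFinset.1 hx)
  have := hasSum_single (f := fun j => (P j).indicator (fun x => g p * Real.sign (f' x).det) x) k
    fun j hj => Set.indicator_of_notMem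
      (fun hxj => Set.disjoint_left.1 (hPd hj) hxj hxk) _
  simpa only [Set.indicator_of_mem hxk] using this

theorem Matrix.det_of_row_zero_succ_eq_zero {m : ℕ} (M : Matrix (Fin (m + 1)) (Fin (m + 1)) ℝ)
    (h : ∀ j : Fin m, M 0 j.succ = 0) :
    M.det = M 0 0 * (M.submatrix Fin.succ Fin.succ).det := by
  rw [Matrix.det_succ_row_zero, Fin.sum_univ_succ]
  simp [h, Fin.succAbove_zero]

/-- Replacing the unit normal by another vector multiplies the oriented volume by the normal
component of that vector. -/
theorem det_cons_eq_inner_mul_det_cons {m : ℕ} {ν : EuclideanSpace ℝ (Fin (m + 1))}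
    {u : Fin m → EuclideanSpace ℝ (Fin (m + 1))} (w : EuclideanSpace ℝ (Fin (m + 1)))
    (hν : ‖ν‖ = 1) (hperp : ∀ i, ⟪ν, u i⟫ = 0)
    (hdet : (Matrix.of fun i j : Fin (m + 1) =>
      (Fin.cons ν u : Fin (m + 1) → EuclideanSpace ℝ (Fin (m + 1))) j i).det ≠ 0) :
    (Matrix.of fun i j : Fin (m + 1) =>
      (Fin.cons w u : Fin (m + 1) → EuclideanSpace ℝ (Fin (m + 1))) j i).det
      = ⟪w, ν⟫ * (Matrix.of fun i j : Fin (m + 1) =>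
        (Fin.cons ν u : Fin (m + 1) → EuclideanSpace ℝ (Fin (m + 1))) j i).det := by
  set C : EuclideanSpace ℝ (Fin (m + 1)) → Matrix (Fin (m + 1)) (Fin (m + 1)) ℝ := fun z =>
    Matrix.of fun i j : Fin (m + 1) =>
      (Fin.cons z u : Fin (m + 1) → EuclideanSpace ℝ (Fin (m + 1))) j i with hC
  have hgram : ∀ z i j, ((C ν).transpose * C z) i j =
      ⟪(Fin.cons ν u : Fin (m + 1) → EuclideanSpace ℝ (Fin (m + 1))) i,
        (Fin.cons z u : Fin (m + 1) → EuclideanSpace ℝ (Fin (m + 1))) j⟫ := by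
    intro z i j
    simp [hC, Matrix.mul_apply, PiLp.inner_apply, mul_comm]
  have hblock : ∀ z, (C ν).det * (C z).det = ⟪ν, z⟫ * (Matrix.of fun i j => ⟪u i, u j⟫).det := by
    intro z
    rw [← Matrix.det_transpose (C ν), ← Matrix.det_mul, Matrix.det_of_row_zero_succ_eq_zero]
    · rw [hgram]
      congr 2
      ext i j
      simp [hgram]
    · intro j
      simp [hgram, hperp]
  have h1 := hblock ν
  rw [real_inner_self_eq_norm_sq, hν] at h1
  refine mul_left_cancel₀ hdet ?_
  change (C ν).det * (C w).det = (C ν).det * (⟪w, ν⟫ * (C ν).det)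
  rw [hblock w, real_inner_comm]
  linear_combination (-⟪w, ν⟫) * h1

theorem det_snoc_eq_neg_one_pow_mul_det_cons {m : ℕ} (w : EuclideanSpace ℝ (Fin (m + 1)))
    (u : Fin m → EuclideanSpace ℝ (Fin (m + 1))) :
    (Matrix.of fun i j : Fin (m + 1) =>
      (Fin.snoc u w : Fin (m + 1) → EuclideanSpace ℝ (Fin (m + 1))) j i).det
      = (-1) ^ m * (Matrix.of fun i j : Fin (m + 1) =>
        (Fin.cons w u : Fin (m + 1) → EuclideanSpace ℝ (Fin (m + 1))) j i).det := by
  have h := Matrix.det_permute' (finRotate (m + 1)) (Matrix.of fun i j : Fin (m + 1) =>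
    (Fin.cons w u : Fin (m + 1) → EuclideanSpace ℝ (Fin (m + 1))) j i)
  rw [sign_finRotate] at h
  simp only [Fin.snoc_eq_cons_rotate]
  refine h.trans ?_
  simp

theorem det_of_map_columns {n : ℕ} (D : EuclideanSpace ℝ (Fin n) →L[ℝ] EuclideanSpace ℝ (Fin n))
    (c : Fin n → EuclideanSpace ℝ (Fin n)) :
    (Matrix.of fun i j => D (c j) i).det = D.det * (Matrix.of fun i j => c j i).det := by
  let b := (EuclideanSpace.basisFun (Fin n) ℝ).toBasis
  rw [ContinuousLinearMap.det, ← LinearMap.det_toMatrix b, ← Matrix.det_mul]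
  congr 1
  ext i j
  have h := congrFun (LinearMap.toMatrix_mulVec_repr b b (D : _ →ₗ[ℝ] _) (c j)) i
  simp only [Matrix.mul_apply, Matrix.of_apply]
  simpa [b, Matrix.mulVec, dotProduct] using h.symm

/-- Splitting off the last coordinate of a Euclidean space. -/
noncomputable def EuclideanSpace.splitLast (m : ℕ) :
    EuclideanSpace ℝ (Fin (m + 1)) ≃L[ℝ] EuclideanSpace ℝ (Fin m) × ℝ :=
  LinearEquiv.toContinuousLinearEquiv
    { toFun := fun x => (WithLp.toLp 2 fun k => x k.castSucc, x (Fin.last m))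
      invFun := fun q => WithLp.toLp 2 (Fin.snoc (α := fun _ => ℝ) q.1 q.2)
      map_add' := fun _ _ => rfl
      map_smul' := fun _ _ => rfl
      left_inv := fun x => by
        ext i
        refine Fin.lastCases ?_ (fun k => ?_) i <;> simp
      right_inv := fun q => by
        ext <;> simp }

theorem EuclideanSpace.splitLast_apply {m : ℕ} (x : EuclideanSpace ℝ (Fin (m + 1))) :
    splitLast m x = (WithLp.toLp 2 fun k => x k.castSucc, x (Fin.last m)) := rfl

theorem EuclideanSpace.splitLast_single_castSucc {m : ℕ} (k : Fin m) :
    splitLast m (single k.castSucc 1) = (single k 1, 0) := by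
  rw [splitLast_apply]
  ext i
  · by_cases h : i = k <;> simp [h]
  · simp

theorem EuclideanSpace.splitLast_single_last {m : ℕ} :
    splitLast m (single (Fin.last m) 1) = (0, 1) := by
  rw [splitLast_apply]
  ext i <;> simp

theorem EuclideanSpace.measurePreserving_splitLast (m : ℕ) :
    MeasurePreserving (splitLast m) volume volume := by
  have h1 : MeasurePreserving (WithLp.ofLp : EuclideanSpace ℝ (Fin (m + 1)) → Fin (m + 1) → ℝ) :=
    PiLp.volume_preserving_ofLp _
  have h2 := volume_preserving_piFinSuccAbove (fun _ : Fin (m + 1) => ℝ) (Fin.last m)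
  have h3 : MeasurePreserving (Prod.swap : ℝ × (Fin m → ℝ) → (Fin m → ℝ) × ℝ) volume volume :=
    Measure.measurePreserving_swap
  have h4 : MeasurePreserving (Prod.map (WithLp.toLp 2 : (Fin m → ℝ) → EuclideanSpace ℝ (Fin m))
      (id : ℝ → ℝ)) volume volume :=
    (PiLp.volume_preserving_toLp _).prod (MeasurePreserving.id _)
  have h := h4.comp (h3.comp (h2.comp h1))
  have heq : (splitLast m : EuclideanSpace ℝ (Fin (m + 1)) → EuclideanSpace ℝ (Fin m) × ℝ) =
      Prod.map (WithLp.toLp 2) id ∘ Prod.swap ∘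
        MeasurableEquiv.piFinSuccAbove (fun _ => ℝ) (Fin.last m) ∘ WithLp.ofLp := by
    funext x
    refine Prod.ext ?_ rfl
    ext k
    simp [splitLast_apply, MeasurableEquiv.piFinSuccAbove, Fin.insertNthEquiv, Fin.init]
  rwa [heq]

/-- **Lagrangian flux representation for compressible flows**
(donating region theorem, parametrized form). Here the dimension is `n = m + 1 ≥ 2`.
`φ` is a jointly `C¹` two-parameter flow of the `C¹` time-dependent vector field `v`,
`ρ` is a `C¹` solution of the conservation law `∂_t ρ + div_x(ρ v) = 0`,
`γ` parametrizes a hypersurface over the compact measurable set `K` with continuous unit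
normal field `ν` (orthogonal to the tangent directions, with positive oriented surface
element `det[ν, ∂₁γ, …, ∂_mγ] > 0` on `K`), and `Ψ(s,t) = φ_t^0(γ(s))` is the crossing map,
with `n×n` Jacobian matrix `JΨ` (columns `∂_{s₁}Ψ, …, ∂_{s_m}Ψ, ∂_tΨ`). Assuming a.e. finite
nondegenerate fibers, with `deg(Ψ,p) = Σ_{(s,t) ∈ Ψ⁻¹{p}} sgn det JΨ(s,t)`, and the stated
integrability, the Eulerian flux integral equals `(−1)ⁿ ∫ ρ(0,p) deg(Ψ,p) dp`. -/
theorem lagrangian_flux_representation (m : ℕ) (hm : 1 ≤ m)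
    (v : ℝ → EuclideanSpace ℝ (Fin (m + 1)) → EuclideanSpace ℝ (Fin (m + 1)))
    (hv : ContDiff ℝ 1 fun q : ℝ × EuclideanSpace ℝ (Fin (m + 1)) => v q.1 q.2)
    (φ : ℝ → ℝ → EuclideanSpace ℝ (Fin (m + 1)) → EuclideanSpace ℝ (Fin (m + 1)))
    (hφC1 : ContDiff ℝ 1 fun q : ℝ × ℝ × EuclideanSpace ℝ (Fin (m + 1)) => φ q.1 q.2.1 q.2.2)
    (hφid : ∀ a x, φ a a x = x)
    (hφ' : ∀ a b x, HasDerivAt (fun s => φ a s x) (v b (φ a b x)) b)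
    (hφcomp : ∀ a b c x, φ b c (φ a b x) = φ a c x)
    (ρ : ℝ → EuclideanSpace ℝ (Fin (m + 1)) → ℝ)
    (hρ : ContDiff ℝ 1 fun q : ℝ × EuclideanSpace ℝ (Fin (m + 1)) => ρ q.1 q.2)
    (hcons : ∀ t x, deriv (fun s => ρ s x) t
      + ∑ i : Fin (m + 1),
          fderiv ℝ (fun y => ρ t y * v t y i) x (EuclideanSpace.single i 1) = 0)
    (K : Set (EuclideanSpace ℝ (Fin m))) (hK : IsCompact K) (hKm : MeasurableSet K)
    (γ : EuclideanSpace ℝ (Fin m) → EuclideanSpace ℝ (Fin (m + 1)))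
    (hγ : ContDiff ℝ 1 γ) (hγinj : Set.InjOn γ K)
    (ν : EuclideanSpace ℝ (Fin m) → EuclideanSpace ℝ (Fin (m + 1)))
    (hνcont : Continuous ν)
    (hν1 : ∀ s ∈ K, ‖ν s‖ = 1)
    (hνperp : ∀ s ∈ K, ∀ i : Fin m, ⟪ν s, fderiv ℝ γ s (EuclideanSpace.single i 1)⟫ = 0)
    -- the oriented surface area element `det[ν(s), ∂₁γ(s), …, ∂_mγ(s)]`
    (A : EuclideanSpace ℝ (Fin m) → ℝ)
    (hA : ∀ s, A s = (Matrix.of fun i j : Fin (m + 1) =>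
      (Fin.cons (ν s) (fun k : Fin m => fderiv ℝ γ s (EuclideanSpace.single k 1))
        : Fin (m + 1) → EuclideanSpace ℝ (Fin (m + 1))) j i).det)
    (hor : ∀ s ∈ K, 0 < A s)
    (τ : ℝ) (hτ : 0 < τ)
    -- the `n×n` Jacobian matrix of the crossing map `Ψ(s,t) = φ_t^0(γ(s))` in `(s,t)`
    (JΨ : EuclideanSpace ℝ (Fin m) → ℝ → Matrix (Fin (m + 1)) (Fin (m + 1)) ℝ)
    (hJΨ : ∀ s t, JΨ s t = Matrix.of fun i j : Fin (m + 1) =>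
      (Fin.snoc
        (fun k : Fin m => fderiv ℝ (fun s' => φ t 0 (γ s')) s (EuclideanSpace.single k 1))
        (deriv (fun t' => φ t' 0 (γ s)) t)
        : Fin (m + 1) → EuclideanSpace ℝ (Fin (m + 1))) j i)
    -- a.e. point has a finite fiber consisting of nondegenerate crossings
    (hfib : ∀ᵐ p : EuclideanSpace ℝ (Fin (m + 1)),
      {q : EuclideanSpace ℝ (Fin m) × ℝ |
          q.1 ∈ K ∧ q.2 ∈ Set.Icc 0 τ ∧ φ q.2 0 (γ q.1) = p}.Finite ∧
      ∀ q ∈ {q : EuclideanSpace ℝ (Fin m) × ℝ |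
          q.1 ∈ K ∧ q.2 ∈ Set.Icc 0 τ ∧ φ q.2 0 (γ q.1) = p},
        (JΨ q.1 q.2).det ≠ 0)
    -- the degree `deg(Ψ, p)`
    (deg : EuclideanSpace ℝ (Fin (m + 1)) → ℝ)
    (hdeg : ∀ p, deg p = ∑ᶠ q ∈ {q : EuclideanSpace ℝ (Fin m) × ℝ |
        q.1 ∈ K ∧ q.2 ∈ Set.Icc 0 τ ∧ φ q.2 0 (γ q.1) = p},
      Real.sign (JΨ q.1 q.2).det)
    (hint1 : IntegrableOn
      (fun q : EuclideanSpace ℝ (Fin m) × ℝ =>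
        ρ q.2 (γ q.1) * ⟪v q.2 (γ q.1), ν q.1⟫ * A q.1)
      (K ×ˢ Set.Icc 0 τ))
    (hint2 : Integrable fun p => ρ 0 p * deg p) :
    ∫ t in Set.Icc (0:ℝ) τ, ∫ s in K, ρ t (γ s) * ⟪v t (γ s), ν s⟫ * A s
      = (-1 : ℝ) ^ (m + 1) * ∫ p, ρ 0 p * deg p := by
  set π := EuclideanSpace.splitLast m
  have hπm : MeasurePreserving π volume volume := EuclideanSpace.measurePreserving_splitLast m
  have hπe : MeasurableEmbedding π := π.toHomeomorph.measurableEmbedding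
  set f : EuclideanSpace ℝ (Fin (m + 1)) → EuclideanSpace ℝ (Fin (m + 1)) :=
    fun x => φ (π x).2 0 (γ (π x).1) with hf
  have hΦ : ContDiff ℝ 1 fun q : EuclideanSpace ℝ (Fin m) × ℝ => φ q.2 0 (γ q.1) :=
    hφC1.comp (contDiff_snd.prodMk (contDiff_const.prodMk (hγ.comp contDiff_fst)))
  have hfC1 : ContDiff ℝ 1 f := hΦ.comp π.contDiff
  have hdetJ : ∀ x, (fderiv ℝ f x).det = (JΨ (π x).1 (π x).2).det := by
    intro x
    have hq := (hΦ.differentiable one_ne_zero (π x)).hasFDerivAt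
    set R := fderiv ℝ (fun q : EuclideanSpace ℝ (Fin m) × ℝ => φ q.2 0 (γ q.1)) (π x)
    have hfx : HasFDerivAt f (R ∘L (π : _ →L[ℝ] EuclideanSpace ℝ (Fin m) × ℝ)) x :=
      hq.comp x π.hasFDerivAt
    have hs : ∀ w, fderiv ℝ (fun s' => φ (π x).2 0 (γ s')) (π x).1 w = R (w, 0) := by
      intro w
      have h : HasFDerivAt (𝕜 := ℝ) (fun s' => φ (π x).2 0 (γ s')) _ (π x).1 :=
        HasFDerivAt.comp (f := fun s' => (s', (π x).2)) (π x).1 hq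
          ((hasFDerivAt_id _).prodMk (hasFDerivAt_const (π x).2 _))
      rw [h.fderiv]
      simp
    have ht : deriv (fun t' => φ t' 0 (γ (π x).1)) (π x).2 = R (0, 1) :=
      (HasFDerivAt.comp_hasDerivAt (f := fun t' => ((π x).1, t')) (π x).2 hq
        ((hasDerivAt_const _ (π x).1).prodMk (hasDerivAt_id _))).deriv
    have hlast : π (EuclideanSpace.single (Fin.last m) 1) = (0, 1) :=
      EuclideanSpace.splitLast_single_last
    have hcast (k : Fin m) :
        π (EuclideanSpace.single k.castSucc 1) = (EuclideanSpace.single k 1, 0) :=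
      EuclideanSpace.splitLast_single_castSucc k
    have hid := det_of_map_columns (fderiv ℝ f x) fun j => EuclideanSpace.single j 1
    have hone : (Matrix.of fun i j : Fin (m + 1) =>
        (EuclideanSpace.single j (1 : ℝ) : EuclideanSpace ℝ (Fin (m + 1))) i) = 1 := by
      ext i j
      simp [Matrix.one_apply]
    rw [hone, Matrix.det_one, mul_one] at hid
    rw [← hid, hJΨ, hfx.fderiv]
    congr 2
    funext i j
    refine Fin.lastCases ?_ (fun k => ?_) j
    · simp [ht, hlast]
    · simp [hs, hcast]
  have hflux : ∀ s ∈ K, ∀ t, ρ t (γ s) * ⟪v t (γ s), ν s⟫ * A s =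
      (-1) ^ (m + 1) * (ρ 0 (φ t 0 (γ s)) * (JΨ s t).det) := by
    intro s hs t
    have hγs : ∀ w, fderiv ℝ (fun s' => φ t 0 (γ s')) s w =
        fderiv ℝ (φ t 0) (γ s) (fderiv ℝ γ s w) := by
      intro w
      have hd : Differentiable ℝ (φ t 0) :=
        (hφC1.comp (contDiff_const.prodMk (contDiff_const.prodMk contDiff_id)) :
          ContDiff ℝ 1 (φ t 0)).differentiable one_ne_zero
      have h : HasFDerivAt (𝕜 := ℝ) (fun s' => φ t 0 (γ s')) _ s :=
        (hd (γ s)).hasFDerivAt.comp s (hγ.differentiable one_ne_zero s).hasFDerivAt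
      rw [h.fderiv]
      rfl
    have hcol : (JΨ s t).det = (fderiv ℝ (φ t 0) (γ s)).det * ((-1) ^ m *
        (⟪-v t (γ s), ν s⟫ * A s)) := by
      rw [hA s, ← det_cons_eq_inner_mul_det_cons (-v t (γ s)) (hν1 s hs) (hνperp s hs)
        (hA s ▸ (hor s hs).ne'), ← det_snoc_eq_neg_one_pow_mul_det_cons,
        ← det_of_map_columns, hJΨ]
      congr 2
      funext i j
      refine Fin.lastCases ?_ (fun k => ?_) j
      · simp [(hasDerivAt_flow_initial_time hφC1 hφid hφ' hφcomp t 0 (γ s)).deriv]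
      · simp [hγs]
    have hρ0 := density_mul_det_fderiv_flow hv hφC1 hφid hφ' hφcomp hρ hcons t 0 (γ s)
    have hsq : ((-1 : ℝ) ^ m) * (-1) ^ m = 1 := by
      rw [← mul_pow]
      simp
    rw [hcol, ← hρ0, inner_neg_left, pow_succ]
    linear_combination (-ρ 0 (φ t 0 (γ s)) * (fderiv ℝ (φ t 0) (γ s)).det *
      ⟪v t (γ s), ν s⟫ * A s) * hsq
  set S : Set (EuclideanSpace ℝ (Fin m) × ℝ) := K ×ˢ Set.Icc 0 τ with hS
  have hSm : MeasurableSet S := hKm.prod measurableSet_Icc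
  have hTm : MeasurableSet (π ⁻¹' S) := hπe.measurable hSm
  have hfluxT : Set.EqOn
      (fun x => ρ (π x).2 (γ (π x).1) * ⟪v (π x).2 (γ (π x).1), ν (π x).1⟫ * A (π x).1)
      (fun x => (-1) ^ (m + 1) * (ρ 0 (f x) * (fderiv ℝ f x).det)) (π ⁻¹' S) := by
    intro x hx
    simp only [hdetJ x]
    exact hflux _ hx.1 _
  have hcont : Continuous fun x => (fderiv ℝ f x).det :=
    ContinuousLinearMap.continuous_det.comp (hfC1.continuous_fderiv one_ne_zero)
  have hintT : IntegrableOn (fun x => ρ 0 (f x) * (fderiv ℝ f x).det) (π ⁻¹' S) volume := by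
    have h := (hπm.integrableOn_comp_preimage hπe).2 hint1
    have h' := ((integrableOn_congr_fun hfluxT hTm).1 h).const_mul ((-1) ^ (m + 1))
    refine h'.congr (.of_forall fun x => ?_)
    simp [← mul_assoc, ← mul_pow]
  have hbij : ∀ p, Set.BijOn π {x | x ∈ π ⁻¹' S ∧ f x = p}
      {q : EuclideanSpace ℝ (Fin m) × ℝ |
        q.1 ∈ K ∧ q.2 ∈ Set.Icc 0 τ ∧ φ q.2 0 (γ q.1) = p} := fun p =>
    ⟨fun x hx => ⟨hx.1.1, hx.1.2, hx.2⟩, π.injective.injOn, fun q hq =>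
      ⟨π.symm q, by simpa [hS, hf, and_assoc] using hq, π.apply_symm_apply q⟩⟩
  have harea := integral_mul_det_eq_integral_mul_finsum_sign volume hTm
    (fun x _ => (hfC1.differentiable one_ne_zero x).hasFDerivAt.hasFDerivWithinAt)
    hcont.measurable (ρ 0) hintT (by
      filter_upwards [hfib] with p hp
      refine ⟨(hbij p).finite_iff_finite.2 hp.1, fun x hx hxp => ?_⟩
      rw [hdetJ]
      exact hp.2 _ ((hbij p).mapsTo ⟨hx, hxp⟩))
  have hdeg' : ∀ p, ∑ᶠ x ∈ {x | x ∈ π ⁻¹' S ∧ f x = p}, Real.sign (fderiv ℝ f x).det = deg p := by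
    intro p
    rw [hdeg p]
    exact finsum_mem_eq_of_bijOn π (hbij p) fun x _ => by rw [hdetJ]
  simp only [hdeg'] at harea
  calc ∫ t in Set.Icc (0 : ℝ) τ, ∫ s in K, ρ t (γ s) * ⟪v t (γ s), ν s⟫ * A s
      = ∫ q in S, ρ q.2 (γ q.1) * ⟪v q.2 (γ q.1), ν q.1⟫ * A q.1 := by
        rw [hS, Measure.volume_eq_prod, ← Measure.prod_restrict]
        refine (integral_prod_symm (fun q : EuclideanSpace ℝ (Fin m) × ℝ =>
          ρ q.2 (γ q.1) * ⟪v q.2 (γ q.1), ν q.1⟫ * A q.1) ?_).symm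
        rw [Measure.prod_restrict]
        exact hint1
    _ = ∫ x in π ⁻¹' S,
          ρ (π x).2 (γ (π x).1) * ⟪v (π x).2 (γ (π x).1), ν (π x).1⟫ * A (π x).1 :=
        (hπm.setIntegral_preimage_emb hπe _ S).symm
    _ = (-1 : ℝ) ^ (m + 1) * ∫ p, ρ 0 p * deg p := by
        rw [setIntegral_congr_fun hTm hfluxT, integral_const_mul, harea]
end

section
/- Pointwise flux–Jacobian identity (Eq. (2.5) of the paper, parametrized form). Let n ≥ 2, let v : ℝ × ℝⁿ → ℝⁿ be a C¹ time-dependent vector field with a jointly C¹ two-parameter flow φ, so that φ_0^t ∘ φ_t^0 = id and φ_t^0 ∘ φ_0^t = id for every t. Let γ : ℝ^{n−1} → ℝⁿ be differentiable at a point s, and let ν ∈ ℝⁿ satisfy ‖ν‖ = 1 and ⟨ν, ∂_iγ(s)⟩ = 0 for i = 1,…,n−1. Define Ψ(s,t) := φ_t^0(γ(s)). Then for every t: det[∂_{s_1}Ψ(s,t), …, ∂_{s_{n−1}}Ψ(s,t), ∂_tΨ(s,t)] · det(D(φ_0^t)|_{Ψ(s,t)}) = (−1)ⁿ · ⟨v(t,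 γ(s)), ν⟩ · det[ν, ∂_1γ(s), …, ∂_{n−1}γ(s)]. Here the left-hand determinant is that of the n×n Jacobian of Ψ in the variables (s_1,…,s_{n−1},t). -/
open scoped RealInnerProductSpace

/-- The matrix with columns `f j`, as the value of the determinant of the standard basis. -/
lemma det_of_columns_eq_basisFun_det {n : ℕ} (f : Fin n → EuclideanSpace ℝ (Fin n)) :
    (Matrix.of fun i j : Fin n => f j i).det =
      (EuclideanSpace.basisFun (Fin n) ℝ).toBasis.det f := by
  rw [Module.Basis.det_apply]
  congr 1

/-- Columns that are all orthogonal to a common nonzero vector have zero determinant. -/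
lemma det_of_columns_eq_zero_of_orthogonal {n : ℕ} {ν : EuclideanSpace ℝ (Fin n)} (hν : ν ≠ 0)
    (f : Fin n → EuclideanSpace ℝ (Fin n)) (hf : ∀ j, ⟪ν, f j⟫ = 0) :
    (Matrix.of fun i j : Fin n => f j i).det = 0 := by
  refine Matrix.exists_vecMul_eq_zero_iff.mp ⟨fun i => ν i, fun h => hν ?_, ?_⟩
  · ext i
    exact congrFun h i
  · ext j
    rw [Pi.zero_apply, ← hf j, PiLp.inner_apply]
    simp [Matrix.vecMul, dotProduct, mul_comm]

/-- If the vectors `g k` are orthogonal to the unit vector `ν`, only the `ν`-component of the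
first column contributes to the determinant. -/
lemma basisFun_det_cons_eq_inner_mul {m : ℕ} {ν : EuclideanSpace ℝ (Fin (m + 1))}
    (hν : ‖ν‖ = 1) (g : Fin m → EuclideanSpace ℝ (Fin (m + 1))) (hg : ∀ k, ⟪ν, g k⟫ = 0)
    (w : EuclideanSpace ℝ (Fin (m + 1))) :
    (EuclideanSpace.basisFun (Fin (m + 1)) ℝ).toBasis.det (Fin.cons w g) =
      ⟪w, ν⟫ * (EuclideanSpace.basisFun (Fin (m + 1)) ℝ).toBasis.det (Fin.cons ν g) := by
  set D := (EuclideanSpace.basisFun (Fin (m + 1)) ℝ).toBasis.det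
  have hzero : D (Fin.cons (w - ⟪w, ν⟫ • ν) g) = 0 := by
    rw [← det_of_columns_eq_basisFun_det]
    refine det_of_columns_eq_zero_of_orthogonal (ν := ν) (by rintro rfl; simp at hν) _ ?_
    refine Fin.cases ?_ (fun k => by simpa using hg k)
    simp [inner_sub_right, inner_smul_right, hν, real_inner_comm]
  have hlin : D.curryLeft (w - ⟪w, ν⟫ • ν) g =
      D.curryLeft w g - ⟪w, ν⟫ * D.curryLeft ν g := by
    simp only [map_sub, map_smul, AlternatingMap.sub_apply, AlternatingMap.smul_apply, smul_eq_mul]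
  exact sub_eq_zero.mp (hlin.symm.trans hzero)

/-- Moving the last column to the front multiplies the determinant by `(-1) ^ m`. -/
lemma basisFun_det_snoc {m : ℕ} (g : Fin m → EuclideanSpace ℝ (Fin (m + 1)))
    (w : EuclideanSpace ℝ (Fin (m + 1))) :
    (EuclideanSpace.basisFun (Fin (m + 1)) ℝ).toBasis.det
        (Fin.snoc g w : Fin (m + 1) → EuclideanSpace ℝ (Fin (m + 1))) =
      (-1) ^ m * (EuclideanSpace.basisFun (Fin (m + 1)) ℝ).toBasis.det (Fin.cons w g) := by
  have h := (EuclideanSpace.basisFun (Fin (m + 1)) ℝ).toBasis.det.map_perm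
    (Fin.cons w g) (finRotate (m + 1))
  rw [Fin.snoc_eq_cons_rotate]
  simpa [Function.comp_def, sign_finRotate, Units.smul_def] using h

/-- Differentiating `ψ t (χ t) = x` in `t`: the derivative of `χ` is mapped by the spatial
derivative of `ψ` to minus the time derivative of `ψ`. -/
lemma fderiv_apply_deriv_eq_neg_of_comp_eq_const {E F : Type*} [NormedAddCommGroup E]
    [NormedSpace ℝ E] [NormedAddCommGroup F] [NormedSpace ℝ F] {ψ : ℝ → E → F} {χ : ℝ → E} {t : ℝ}
    {x u : F} (hψ : DifferentiableAt ℝ (fun q : ℝ × E => ψ q.1 q.2) (t, χ t))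
    (hχ : DifferentiableAt ℝ χ t) (hu : HasDerivAt (fun b => ψ b (χ t)) u t)
    (hx : ∀ b, ψ b (χ b) = x) :
    fderiv ℝ (ψ t) (χ t) (deriv χ t) = -u := by
  set L := fderiv ℝ (fun q : ℝ × E => ψ q.1 q.2) (t, χ t)
  have hL : HasFDerivAt (fun q : ℝ × E => ψ q.1 q.2) L (t, χ t) := hψ.hasFDerivAt
  have htime : L (1, 0) = u := by
    have h := hL.comp_hasDerivAt t ((hasDerivAt_id t).prodMk (hasDerivAt_const t (χ t)))
    exact h.unique hu
  have hspace : fderiv ℝ (ψ t) (χ t) (deriv χ t) = L (0, deriv χ t) := by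
    have h : HasFDerivAt (ψ t) (L.comp (ContinuousLinearMap.inr ℝ ℝ E)) (χ t) :=
      hL.comp (χ t) (hasFDerivAt_prodMk_right t (χ t))
    rw [h.fderiv]
    simp
  have htotal : L (1, deriv χ t) = 0 := by
    have h := hL.comp_hasDerivAt t ((hasDerivAt_id t).prodMk hχ.hasDerivAt)
    refine h.unique ?_
    have hconst : ((fun q : ℝ × E => ψ q.1 q.2) ∘ fun b => (id b, χ b)) = fun _ => x := funext hx
    rw [hconst]
    exact hasDerivAt_const t x
  rw [hspace, ← htime, eq_neg_iff_add_eq_zero, ← map_add]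
  simpa using htotal

/-- **Pointwise flux–Jacobian identity** (Eq. (2.5) of the paper, parametrized form).
Here `n = m + 1 ≥ 2`. With `Ψ(s,t) = φ_t^0(γ(s))` the crossing map, for a unit normal `ν`
at `γ(s)` orthogonal to all tangent directions `∂_iγ(s)`:
`det[∂_{s₁}Ψ, …, ∂_{s_{n-1}}Ψ, ∂_tΨ] · det(D(φ_0^t)|_{Ψ(s,t)})
  = (−1)ⁿ ⟨v(t,γ(s)), ν⟩ · det[ν, ∂_1γ(s), …, ∂_{n-1}γ(s)]`. -/
theorem pointwise_flux_jacobian_identity (m : ℕ) (hm : 1 ≤ m)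
    (v : ℝ → EuclideanSpace ℝ (Fin (m + 1)) → EuclideanSpace ℝ (Fin (m + 1)))
    (hv : ContDiff ℝ 1 fun q : ℝ × EuclideanSpace ℝ (Fin (m + 1)) => v q.1 q.2)
    (φ : ℝ → ℝ → EuclideanSpace ℝ (Fin (m + 1)) → EuclideanSpace ℝ (Fin (m + 1)))
    (hφC1 : ContDiff ℝ 1 fun q : ℝ × ℝ × EuclideanSpace ℝ (Fin (m + 1)) => φ q.1 q.2.1 q.2.2)
    (hφid : ∀ a x, φ a a x = x)
    (hφ' : ∀ a b x, HasDerivAt (fun s => φ a s x) (v b (φ a b x)) b)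
    (hφcomp : ∀ a b c x, φ b c (φ a b x) = φ a c x)
    (γ : EuclideanSpace ℝ (Fin m) → EuclideanSpace ℝ (Fin (m + 1)))
    (s : EuclideanSpace ℝ (Fin m))
    (hγ : DifferentiableAt ℝ γ s)
    (ν : EuclideanSpace ℝ (Fin (m + 1)))
    (hν1 : ‖ν‖ = 1)
    (hνperp : ∀ i : Fin m, ⟪ν, fderiv ℝ γ s (EuclideanSpace.single i 1)⟫ = 0)
    (t : ℝ) :
    (Matrix.of fun i j : Fin (m + 1) =>
        (Fin.snoc
          (fun k : Fin m =>
            fderiv ℝ (fun s' => φ t 0 (γ s')) s (EuclideanSpace.single k 1))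
          (deriv (fun t' => φ t' 0 (γ s)) t)
          : Fin (m + 1) → EuclideanSpace ℝ (Fin (m + 1))) j i).det
      * (fderiv ℝ (φ 0 t) (φ t 0 (γ s))).det
    = (-1 : ℝ) ^ (m + 1) * ⟪v t (γ s), ν⟫ *
      (Matrix.of fun i j : Fin (m + 1) =>
        (Fin.cons ν (fun k : Fin m => fderiv ℝ γ s (EuclideanSpace.single k 1))
          : Fin (m + 1) → EuclideanSpace ℝ (Fin (m + 1))) j i).det := by
  set x := γ s
  set A := fderiv ℝ (φ 0 t) (φ t 0 x)
  have hinv : ∀ b y, φ 0 b (φ b 0 y) = y := fun b y => by rw [hφcomp, hφid]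
  have hdiff : Differentiable ℝ
      fun q : ℝ × ℝ × EuclideanSpace ℝ (Fin (m + 1)) => φ q.1 q.2.1 q.2.2 :=
    hφC1.differentiable one_ne_zero
  have hspace : ∀ a b, Differentiable ℝ (φ a b) := fun a b =>
    hdiff.comp (f := fun y => (a, b, y)) (by fun_prop)
  have htime : A (deriv (fun t' => φ t' 0 x) t) = -v t x := by
    refine fderiv_apply_deriv_eq_neg_of_comp_eq_const (ψ := φ 0) (x := x) ?_ ?_ ?_
      fun b => hinv b x
    · exact (hdiff.comp (f := fun q : ℝ × EuclideanSpace ℝ (Fin (m + 1)) => ((0 : ℝ), q.1, q.2))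
        (by fun_prop)).differentiableAt
    · exact (hdiff.comp (f := fun t' : ℝ => (t', (0 : ℝ), x)) (by fun_prop)).differentiableAt
    · simpa only [hinv] using hφ' 0 t (φ t 0 x)
  have htangent : ∀ w, A (fderiv ℝ (fun s' => φ t 0 (γ s')) s w) = fderiv ℝ γ s w := by
    intro w
    have hΨ : DifferentiableAt ℝ (fun s' => φ t 0 (γ s')) s :=
      (hspace t 0 (γ s)).comp s hγ
    have h := fderiv_comp s (hspace 0 t (φ t 0 (γ s))) hΨ
    have hcomp : φ 0 t ∘ (fun s' => φ t 0 (γ s')) = γ := funext fun s' => hinv t (γ s')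
    rw [hcomp] at h
    rw [h]
    rfl
  rw [det_of_columns_eq_basisFun_det, det_of_columns_eq_basisFun_det, mul_comm,
    ContinuousLinearMap.det, ← Module.Basis.det_comp, Fin.comp_snoc]
  simp only [Function.comp_def, ContinuousLinearMap.coe_coe, htime, htangent]
  rw [basisFun_det_snoc, basisFun_det_cons_eq_inner_mul hν1 _ hνperp, inner_neg_left]
  ring
end

section
/- Signed change-of-variables formula with topological degree (the area-formula step in the proof of the main theorem). Let n ≥ 1, let f : ℝⁿ → ℝⁿ be C¹, let K ⊂ ℝⁿ be compact and measurable, and let g : ℝⁿ → ℝ be continuous. Assume that for Lebesgue-a.e. p ∈ ℝⁿ the set {x ∈ K : f(x) = p and det Df(x) ≠ 0} is finite, define d(p) := Σ_{x ∈ K, f(x) = p} sgn(det Df(x)) (points with det Df(x) = 0 contribute 0), and assume that x ↦ g(f(x)) · det Df(x) is Lebesgue integrable on K and p ↦ g(p) · d(p) is Lebesgue integrable on ℝⁿ. Then ∫_K g(f(x)) · det Df(x) dx = ∫_{ℝⁿ} g(p) · d(p) dp. -/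
open MeasureTheory

section SignedFiberSum

open Set Function
open scoped NNReal

variable {E : Type*} [NormedAddCommGroup E] [NormedSpace ℝ E]

/-- The sum of the signs of the Jacobian determinant of `f` over the points of `s` in the fiber
of `f` above `p`. -/
noncomputable def signedFiberSum (f : E → E) (s : Set E) (p : E) : ℝ :=
  ∑ᶠ x ∈ {x | x ∈ s ∧ f x = p}, Real.sign (fderiv ℝ f x).det

theorem signedFiberSum_apply_of_injOn {f : E → E} {s : Set E} (hf : InjOn f s) {x : E}
    (hx : x ∈ s) : signedFiberSum f s (f x) = Real.sign (fderiv ℝ f x).det := by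
  have : {y | y ∈ s ∧ f y = f x} = {x} := by
    ext y
    exact ⟨fun h => hf h.1 hx h.2, by rintro rfl; exact ⟨hx, rfl⟩⟩
  rw [signedFiberSum, this, finsum_mem_singleton]

theorem signedFiberSum_of_notMem_image {f : E → E} {s : Set E} {p : E} (hp : p ∉ f '' s) :
    signedFiberSum f s p = 0 := by
  have : {y | y ∈ s ∧ f y = p} = ∅ := eq_empty_of_forall_notMem fun y hy => hp ⟨y, hy⟩
  rw [signedFiberSum, this, finsum_mem_empty]

theorem signedFiberSum_inter_det_ne_zero (f : E → E) (s : Set E) (p : E) :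
    signedFiberSum f (s ∩ {x | (fderiv ℝ f x).det ≠ 0}) p = signedFiberSum f s p := by
  refine finsum_mem_inter_support_eq _ _ _ ?_
  ext x
  simp only [mem_inter_iff, mem_ofPred_eq, mem_support, ne_eq, Real.sign_eq_zero_iff]
  tauto

theorem hasSum_signedFiberSum {ι : Type*} {f : E → E} {t : ι → Set E}
    (hd : Pairwise (Disjoint on t)) {p : E} (hfin : {x | x ∈ ⋃ i, t i ∧ f x = p}.Finite) :
    HasSum (fun i => signedFiberSum f (t i) p) (signedFiberSum f (⋃ i, t i) p) := by
  classical
  have hsum : ∀ i, signedFiberSum f (t i) p =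
      ∑ x ∈ hfin.toFinset, (t i).indicator (fun x => Real.sign (fderiv ℝ f x).det) x := by
    intro i
    rw [← finsum_mem_eq_finite_toFinset_sum _ hfin, signedFiberSum, finsum_mem_def,
      finsum_mem_def]
    refine finsum_congr fun x => ?_
    by_cases hx : x ∈ t i <;> by_cases hp : f x = p <;>
      simp [indicator, hx, hp]
    intro h
    exact (h i hx).elim
  simp_rw [hsum]
  rw [signedFiberSum, finsum_mem_eq_finite_toFinset_sum _ hfin]
  refine hasSum_sum fun x hx => ?_
  obtain ⟨i, hi⟩ := mem_iUnion.1 (hfin.mem_toFinset.1 hx).1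
  have key := hasSum_single (f := fun j =>
    (t j).indicator (fun x => Real.sign (fderiv ℝ f x).det) x) i fun j hj =>
      indicator_of_notMem (fun hxj => disjoint_left.1 (hd hj) hxj hi) _
  simpa only [indicator_of_mem hi] using key

theorem abs_det_mul_signedFiberSum {f : E → E} {s : Set E} (hf : InjOn f s) (g : E → ℝ)
    {x : E} (hx : x ∈ s) :
    |(fderiv ℝ f x).det| • (g (f x) * signedFiberSum f s (f x)) =
      g (f x) * (fderiv ℝ f x).det := by
  rw [signedFiberSum_apply_of_injOn hf hx, smul_eq_mul]
  rcases lt_trichotomy (fderiv ℝ f x).det 0 with h | h | h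
  · rw [Real.sign_of_neg h, abs_of_neg h]; ring
  · simp [h]
  · rw [Real.sign_of_pos h, abs_of_pos h]; ring

theorem support_mul_signedFiberSum_subset (f : E → E) (s : Set E) (g : E → ℝ) :
    support (fun p => g p * signedFiberSum f s p) ⊆ f '' s := by
  intro p hp
  by_contra h
  exact hp (by simp [signedFiberSum_of_notMem_image h])

variable [FiniteDimensional ℝ E] [MeasurableSpace E] [BorelSpace E]

/-- A measurable set on which `f` has invertible derivative splits into countably many disjoint
measurable sets on which `f` is injective. -/
theorem exists_partition_injOn_of_det_ne_zero {f : E → E} {f' : E → E →L[ℝ] E} {s : Set E}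
    (hs : MeasurableSet s) (hf' : ∀ x ∈ s, HasFDerivWithinAt f (f' x) s x)
    (hdet : ∀ x ∈ s, (f' x).det ≠ 0) :
    ∃ t : ℕ → Set E, Pairwise (Disjoint on t) ∧ (∀ n, MeasurableSet (t n)) ∧
      ⋃ n, t n = s ∧ ∀ n, InjOn f (t n) := by
  have hr : ∀ A : E →L[ℝ] E, ∃ r : ℝ≥0, r ≠ 0 ∧
      (A.det ≠ 0 → ∀ u, ApproximatesLinearOn f A u r → InjOn f u) := by
    intro A
    by_cases hA : A.det = 0
    · exact ⟨1, one_ne_zero, fun h => (h hA).elim⟩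
    let B := A.toContinuousLinearEquivOfDetNeZero hA
    have hB : (B : E →L[ℝ] E) = A := A.coe_toContinuousLinearEquivOfDetNeZero hA
    rcases subsingleton_or_nontrivial E with hE | hE
    · exact ⟨1, one_ne_zero, fun _ u _ => injOn_of_injective (injective_of_subsingleton f)⟩
    · have hpos : 0 < ‖(B.symm : E →L[ℝ] E)‖₊⁻¹ := inv_pos.2 B.nnnorm_symm_pos
      refine ⟨_, (half_pos hpos).ne', fun _ u hu => ?_⟩
      rw [← hB] at hu
      exact hu.injOn (Or.inr (NNReal.half_lt_self hpos.ne'))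
  choose r hr0 hrinj using hr
  rcases s.eq_empty_or_nonempty with rfl | hne
  · exact ⟨fun _ => ∅, fun _ _ _ => disjoint_empty _, fun _ => .empty, by simp, by simp⟩
  obtain ⟨t, A, hd, htm, hcov, happ, hA⟩ :=
    exists_partition_approximatesLinearOn_of_hasFDerivWithinAt f s f' hf' r hr0
  refine ⟨fun n => s ∩ t n, fun i j hij => (hd hij).mono inter_subset_right inter_subset_right,
    fun n => hs.inter (htm n), ?_, fun n => ?_⟩
  · rw [← inter_iUnion, inter_eq_left.2 hcov]
  · obtain ⟨y, hy, hAy⟩ := hA hne n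
    exact hrinj (A n) (hAy ▸ hdet y hy) _ (happ n)

section InjOn

variable {μ : Measure E} [μ.IsAddHaarMeasure] {f : E → E} {s : Set E}

theorem integrable_mul_signedFiberSum (hs : MeasurableSet s) (hdiff : Differentiable ℝ f)
    (hf : InjOn f s) {g : E → ℝ}
    (hint : IntegrableOn (fun x => g (f x) * (fderiv ℝ f x).det) s μ) :
    Integrable (fun p => g p * signedFiberSum f s p) μ := by
  rw [← integrableOn_iff_integrable_of_support_subset (support_mul_signedFiberSum_subset f s g),
    integrableOn_image_iff_integrableOn_abs_det_fderiv_smul μ hs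
      (fun x _ => (hdiff x).hasFDerivAt.hasFDerivWithinAt) hf]
  exact hint.congr_fun (fun x hx => (abs_det_mul_signedFiberSum hf g hx).symm) hs

theorem integral_mul_signedFiberSum (hs : MeasurableSet s) (hdiff : Differentiable ℝ f)
    (hf : InjOn f s) (g : E → ℝ) :
    ∫ p, g p * signedFiberSum f s p ∂μ = ∫ x in s, g (f x) * (fderiv ℝ f x).det ∂μ := by
  rw [← setIntegral_eq_integral_of_forall_compl_eq_zero fun p hp =>
      notMem_support.1 fun h => hp (support_mul_signedFiberSum_subset f s g h),
    integral_image_eq_integral_abs_det_fderiv_smul μ hs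
      (fun x _ => (hdiff x).hasFDerivAt.hasFDerivWithinAt) hf]
  exact setIntegral_congr_fun hs fun x hx => abs_det_mul_signedFiberSum hf g hx

theorem integral_norm_mul_signedFiberSum (hs : MeasurableSet s) (hdiff : Differentiable ℝ f)
    (hf : InjOn f s) (g : E → ℝ) :
    ∫ p, ‖g p * signedFiberSum f s p‖ ∂μ = ∫ x in s, ‖g (f x) * (fderiv ℝ f x).det‖ ∂μ := by
  rw [← setIntegral_eq_integral_of_forall_compl_eq_zero fun p hp => norm_eq_zero.2 <|
      notMem_support.1 fun h => hp (support_mul_signedFiberSum_subset f s g h),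
    integral_image_eq_integral_abs_det_fderiv_smul μ hs
      (fun x _ => (hdiff x).hasFDerivAt.hasFDerivWithinAt) hf]
  refine setIntegral_congr_fun hs fun x hx => ?_
  simp only [← abs_det_mul_signedFiberSum hf g hx, smul_eq_mul, norm_mul, Real.norm_eq_abs,
    abs_abs]

end InjOn

/-- The signed area formula: the integral of `g ∘ f` against the signed Jacobian determinant of
`f` over `s` is the integral of `g` against the signed count of nondegenerate preimages in `s`. -/
theorem setIntegral_comp_mul_det_fderiv {μ : Measure E} [μ.IsAddHaarMeasure] {f : E → E}
    {s : Set E} (hs : MeasurableSet s) (hdiff : Differentiable ℝ f) {g : E → ℝ}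
    (hfin : ∀ᵐ p ∂μ, {x | x ∈ s ∧ f x = p ∧ (fderiv ℝ f x).det ≠ 0}.Finite)
    (hint : IntegrableOn (fun x => g (f x) * (fderiv ℝ f x).det) s μ) :
    ∫ x in s, g (f x) * (fderiv ℝ f x).det ∂μ = ∫ p, g p * signedFiberSum f s p ∂μ := by
  have hmeas : MeasurableSet {x | (fderiv ℝ f x).det ≠ 0} :=
    (ContinuousLinearMap.continuous_det.measurable.comp (measurable_fderiv ℝ f))
      (measurableSet_singleton 0).compl
  obtain ⟨t, hd, htm, htU, htinj⟩ := exists_partition_injOn_of_det_ne_zero (hs.inter hmeas)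
    (fun x _ => (hdiff x).hasFDerivAt.hasFDerivWithinAt) fun x hx => hx.2
  have hintU : IntegrableOn (fun x => g (f x) * (fderiv ℝ f x).det) (⋃ n, t n) μ :=
    htU ▸ hint.mono_set inter_subset_left
  have hleft : ∫ x in s, g (f x) * (fderiv ℝ f x).det ∂μ =
      ∫ x in ⋃ n, t n, g (f x) * (fderiv ℝ f x).det ∂μ := by
    rw [htU]
    apply setIntegral_eq_of_subset_of_forall_sdiff_eq_zero hs inter_subset_left
    intro x hx
    have : (fderiv ℝ f x).det = 0 := by_contra fun h => hx.2 ⟨hx.1, h⟩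
    rw [this, mul_zero]
  have hright : ∫ p, g p * signedFiberSum f s p ∂μ =
      ∫ p, ∑' n, g p * signedFiberSum f (t n) p ∂μ := by
    refine integral_congr_ae ?_
    filter_upwards [hfin] with p hp
    have hp' : {x | x ∈ ⋃ n, t n ∧ f x = p}.Finite := by
      refine hp.subset fun x hx => ?_
      rw [htU] at hx
      exact ⟨hx.1.1, hx.2, hx.1.2⟩
    rw [((hasSum_signedFiberSum hd hp').mul_left (g p)).tsum_eq, htU,
      signedFiberSum_inter_det_ne_zero]
  have hsum := hasSum_integral_of_summable_integral_norm
    (F := fun n p => g p * signedFiberSum f (t n) p) (μ := μ)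
    (fun n => integrable_mul_signedFiberSum (htm n) hdiff (htinj n)
      (hintU.mono_set (subset_iUnion t n)))
    (by
      simp_rw [fun n => integral_norm_mul_signedFiberSum (μ := μ) (htm n) hdiff (htinj n) g]
      exact (hasSum_integral_iUnion htm hd hintU.norm).summable)
  simp_rw [fun n => integral_mul_signedFiberSum (μ := μ) (htm n) hdiff (htinj n) g] at hsum
  rw [hleft, hright]
  exact (hasSum_integral_iUnion htm hd hintU).unique hsum

end SignedFiberSum

/-- **Signed change-of-variables formula with topological degree**
(the area-formula step in the proof of the main theorem).
For a `C¹` map `f : ℝⁿ → ℝⁿ`, a compact measurable set `K`, and a continuous `g`, with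
`d(p) = Σ_{x ∈ K, f(x) = p} sgn(det Df(x))` (a.e. finitely many nondegenerate preimages):
`∫_K g(f(x)) det Df(x) dx = ∫_{ℝⁿ} g(p) d(p) dp`. -/
theorem signed_change_of_variables_with_degree (n : ℕ) (hn : 1 ≤ n)
    (f : (Fin n → ℝ) → (Fin n → ℝ)) (hf : ContDiff ℝ 1 f)
    (K : Set (Fin n → ℝ)) (hK : IsCompact K) (hKm : MeasurableSet K)
    (g : (Fin n → ℝ) → ℝ) (hg : Continuous g)
    (hfin : ∀ᵐ p : Fin n → ℝ,
      {x | x ∈ K ∧ f x = p ∧ (fderiv ℝ f x).det ≠ 0}.Finite)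
    (d : (Fin n → ℝ) → ℝ)
    (hd : ∀ p, d p = ∑ᶠ x ∈ {x | x ∈ K ∧ f x = p}, Real.sign (fderiv ℝ f x).det)
    (hint1 : IntegrableOn (fun x => g (f x) * (fderiv ℝ f x).det) K)
    (hint2 : Integrable fun p => g p * d p) :
    ∫ x in K, g (f x) * (fderiv ℝ f x).det = ∫ p, g p * d p := by
  obtain rfl : d = signedFiberSum f K := funext hd
  exact setIntegral_comp_mul_det_fderiv hKm (hf.differentiable one_ne_zero) hfin hint1
end

section
/- Constancy of the signed crossing count (degree) on components of the complement of the boundary image. Let n ≥ 1, let f : ℝⁿ → ℝⁿ be C¹, and let Ω ⊂ ℝⁿ be a bounded open set with topological frontier ∂Ω. Suppose p, q ∈ ℝⁿ do not lie in f(∂Ω), lie in the same path-component of ℝⁿ \ f(∂Ω), and are regular values of f on the closure of Ω, i.e. det Df(x) ≠ 0 for every x in the closure of Ω with f(x) ∈ {p, q}. Then the fibers f^{−1}({p}) ∩ Ω and f^{−1}({q}) ∩ Ω are finite, and Σ_{x ∈ f^{−1}({p}) ∩ Ω} sgn(det Df(x)) = Σ_{x ∈ f^{−1}({q}) ∩ Ω}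 sgn(det Df(x)). -/
open MeasureTheory Metric Set Filter Topology

section DegreeIntegral

variable {E : Type*} [NormedAddCommGroup E] [NormedSpace ℝ E] [FiniteDimensional ℝ E]

/-- The determinant of an endomorphism is a combination, with coefficients of sum zero, of the
determinants of small perturbations of the identity. -/
theorem exists_det_eq_sum_det_one_add_smul [Nontrivial E] {δ : ℝ} (hδ : 0 < δ) :
    ∃ (s : Finset ℝ) (c : ℝ → ℝ), (∀ t ∈ s, 0 < t ∧ t < δ) ∧ ∑ t ∈ s, c t = 0 ∧
      ∀ A : E →L[ℝ] E, A.det = ∑ t ∈ s, (1 + t • A).det * c t := by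
  obtain ⟨s, hs, hcard⟩ := (Ioo_infinite hδ).exists_subset_card_eq (Module.finrank ℝ E + 1)
  have key : ∀ P : Polynomial ℝ, P.natDegree ≤ Module.finrank ℝ E →
      P.coeff (Module.finrank ℝ E) =
        ∑ t ∈ s, P.eval t * (∏ j ∈ s.erase t, (t - j))⁻¹ := fun P hP ↦ by
    have h := Lagrange.coeff_eq_sum (s := s) (v := id) (P := P) (injOn_id _)
      (P.degree_le_natDegree.trans_lt (by rw [hcard]; exact_mod_cast Nat.lt_succ_of_le hP))
    simpa [hcard, div_eq_mul_inv] using h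
  refine ⟨s, fun t ↦ (∏ j ∈ s.erase t, (t - j))⁻¹, fun t ht ↦ hs ht, ?_, fun A ↦ ?_⟩
  · have h := key 1 (by simp)
    rw [Polynomial.coeff_one, if_neg Module.finrank_pos.ne'] at h
    simpa using h.symm
  · let b := Module.finBasis ℝ E
    let M := LinearMap.toMatrix b b (A : E →ₗ[ℝ] E)
    have h := key _ ((Polynomial.natDegree_det_X_add_C_le M 1).trans_eq (Fintype.card_fin _))
    have hc := Polynomial.coeff_det_X_add_C_card M 1
    rw [Fintype.card_fin] at hc
    rw [hc] at h
    have hdet : A.det = M.det := (LinearMap.det_toMatrix b _).symm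
    rw [hdet, h]
    refine Finset.sum_congr rfl fun t _ ↦ ?_
    congr 1
    have h1 : (1 + t • A).det = (t • M + 1).det := by
      rw [ContinuousLinearMap.det, ← LinearMap.det_toMatrix b]
      congr 1
      simp only [ContinuousLinearMap.toLinearMap_add, ContinuousLinearMap.toLinearMap_smul,
        map_add, map_smul]
      rw [add_comm]
      congr 1
      exact LinearMap.toMatrix_one b
    rw [h1, ← Polynomial.coe_evalRingHom, RingHom.map_det]
    congr 1
    ext i j
    obtain rfl | hij := eq_or_ne i j
    · simp [mul_comm t]
    · simp [Matrix.one_apply_ne hij, mul_comm t]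

/-- Around a point where the Jacobian determinant does not vanish, a `C¹` map is injective, open,
and its Jacobian determinant has constant sign. -/
theorem exists_isOpen_injOn_sign_det_eq {f : E → E} (hf : ContDiff ℝ 1 f) {x : E}
    (hx : (fderiv ℝ f x).det ≠ 0) {W : Set E} (hW : W ∈ 𝓝 x) :
    ∃ U ⊆ W, IsOpen U ∧ x ∈ U ∧ InjOn f U ∧ f '' U ∈ 𝓝 (f x) ∧
      ∀ z ∈ U, |(fderiv ℝ f z).det| = Real.sign (fderiv ℝ f x).det * (fderiv ℝ f z).det := by
  have hstrict : HasStrictFDerivAt f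
      (((fderiv ℝ f x).toContinuousLinearEquivOfDetNeZero hx : E ≃L[ℝ] E) : E →L[ℝ] E) x := by
    rw [ContinuousLinearMap.coe_toContinuousLinearEquivOfDetNeZero]
    exact hf.contDiffAt.hasStrictFDerivAt one_ne_zero
  let e := hstrict.toOpenPartialHomeomorph f
  have hdet : Continuous fun z ↦ (fderiv ℝ f z).det :=
    ContinuousLinearMap.continuous_det.comp (hf.continuous_fderiv one_ne_zero)
  have hsign : ∀ᶠ z in 𝓝 x,
      |(fderiv ℝ f z).det| = Real.sign (fderiv ℝ f x).det * (fderiv ℝ f z).det := by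
    rcases hx.lt_or_gt with h | h
    · filter_upwards [hdet.continuousAt.eventually_lt continuousAt_const h] with z hz
      rw [Real.sign_of_neg h, abs_of_neg hz, neg_one_mul]
    · filter_upwards [continuousAt_const.eventually_lt hdet.continuousAt h] with z hz
      rw [Real.sign_of_pos h, abs_of_pos hz, one_mul]
  have hmem : W ∩ e.source ∩
      {z | |(fderiv ℝ f z).det| = Real.sign (fderiv ℝ f x).det * (fderiv ℝ f z).det} ∈ 𝓝 x :=
    inter_mem (inter_mem hW (e.open_source.mem_nhds hstrict.mem_toOpenPartialHomeomorph_source))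
      hsign
  obtain ⟨U, hUsub, hUo, hxU⟩ := _root_.mem_nhds_iff.1 hmem
  refine ⟨U, fun z hz ↦ (hUsub hz).1.1, hUo, hxU, e.injOn.mono fun z hz ↦ (hUsub hz).1.2, ?_,
    fun z hz ↦ (hUsub hz).2⟩
  exact (e.isOpen_image_of_subset_source hUo fun z hz ↦ (hUsub hz).1.2).mem_nhds
    (mem_image_of_mem f hxU)

/-- The fiber of a `C¹` map over a regular value off the image of the frontier is finite. -/
theorem finite_fiber_of_det_fderiv_ne_zero {f : E → E} (hf : ContDiff ℝ 1 f) {Ω : Set E}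
    (hΩb : Bornology.IsBounded Ω) {p : E} (hp : p ∉ f '' frontier Ω)
    (hreg : ∀ x ∈ Ω, f x = p → (fderiv ℝ f x).det ≠ 0) : {x | x ∈ Ω ∧ f x = p}.Finite := by
  have heq : {x | x ∈ Ω ∧ f x = p} = closure Ω ∩ f ⁻¹' {p} := by
    ext x
    refine ⟨fun hx ↦ ⟨subset_closure hx.1, hx.2⟩, fun hx ↦ ⟨?_, hx.2⟩⟩
    by_contra hxΩ
    exact hp ⟨x, ⟨hx.1, fun hi ↦ hxΩ (interior_subset hi)⟩, hx.2⟩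
  have hcomp : IsCompact {x | x ∈ Ω ∧ f x = p} := by
    rw [heq]
    exact hΩb.isCompact_closure.inter_right (isClosed_singleton.preimage hf.continuous)
  refine hcomp.finite (isDiscrete_iff_forall_mem_exists_isOpen.2 fun x hx ↦ ?_)
  obtain ⟨U, -, hUo, hxU, hinj, -⟩ :=
    exists_isOpen_injOn_sign_det_eq hf (hreg x hx.1 hx.2) univ_mem
  refine ⟨U, hUo, subset_antisymm (fun z hz ↦ ?_) (singleton_subset_iff.2 ⟨hxU, hx⟩)⟩
  exact hinj hz.1 hxU (hz.2.2.trans hx.2.symm)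

variable [MeasurableSpace E] [BorelSpace E] (μ : Measure E) [μ.IsAddHaarMeasure]

/-- The Jacobian determinant of a compactly supported `C¹` map has vanishing integral. -/
theorem integral_det_fderiv_eq_zero_of_hasCompactSupport [Nontrivial E] {h : E → E}
    (hh : ContDiff ℝ 1 h) (hc : HasCompactSupport h) :
    ∫ x, (fderiv ℝ h x).det ∂μ = 0 := by
  obtain ⟨C, hC⟩ := ContDiff.lipschitzWith_of_hasCompactSupport hc hh one_ne_zero
  have hdiff : Differentiable ℝ h := hh.differentiable one_ne_zero
  have hcont : Continuous (fderiv ℝ h) := hh.continuous_fderiv one_ne_zero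
  obtain ⟨R, hR⟩ := hc.isCompact.isBounded.subset_closedBall 0
  have hzero : ∀ x, x ∉ closedBall (0 : E) R → h x = 0 := fun x hx ↦
    image_eq_zero_of_notMem_tsupport fun hx' ↦ hx (hR hx')
  -- determinants near the identity are positive
  obtain ⟨η, hη, hpos⟩ : ∃ η > 0, ∀ A : E →L[ℝ] E, ‖A‖ < η → 0 < (1 + A).det := by
    have hcd : Continuous fun A : E →L[ℝ] E ↦ (1 + A).det :=
      ContinuousLinearMap.continuous_det.comp (continuous_const.add continuous_id)
    have h0 : (0 : ℝ) < (1 + (0 : E →L[ℝ] E)).det := by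
      simp [ContinuousLinearMap.det]
    obtain ⟨η, hη, hb⟩ := Metric.mem_nhds_iff.1
      (hcd.continuousAt.preimage_mem_nhds (Ioi_mem_nhds h0))
    exact ⟨η, hη, fun A hA ↦ hb (by simpa using hA)⟩
  have hδ : 0 < min 1 η / (C + 1) := by positivity
  obtain ⟨s, c, hs, hsum, hdet⟩ := exists_det_eq_sum_det_one_add_smul (E := E) hδ
  have hvol : ∀ t ∈ s, ∫ x in closedBall (0 : E) R, (1 + t • fderiv ℝ h x).det ∂μ
      = μ.real (closedBall 0 R) := by
    intro t ht
    obtain ⟨ht0, htδ⟩ := hs t ht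
    rw [lt_div_iff₀ (by positivity), lt_min_iff] at htδ
    let g : E → E := fun x ↦ x + t • h x
    have hg' : ∀ x, HasFDerivAt g (1 + t • fderiv ℝ h x) x := fun x ↦
      (hasFDerivAt_id x).add ((hdiff x).hasFDerivAt.const_smul t)
    have happrox : ApproximatesLinearOn g
        ((ContinuousLinearEquiv.refl ℝ E : E ≃L[ℝ] E) : E →L[ℝ] E) univ (t.toNNReal * C) := by
      refine LipschitzOnWith.approximatesLinearOn (LipschitzWith.lipschitzOnWith ?_)
      refine LipschitzWith.of_dist_le_mul fun x y ↦ ?_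
      have := hC.dist_le_mul x y
      simp only [g, Pi.sub_apply, ContinuousLinearEquiv.coe_coe, ContinuousLinearEquiv.coe_refl',
        id, add_sub_cancel_left, dist_smul₀, Real.norm_eq_abs, abs_of_pos ht0, NNReal.coe_mul,
        Real.coe_toNNReal t ht0.le, mul_assoc]
      gcongr
    have hsmall : t.toNNReal * C <
        ‖((ContinuousLinearEquiv.refl ℝ E).symm : E →L[ℝ] E)‖₊⁻¹ := by
      have : ‖((ContinuousLinearEquiv.refl ℝ E).symm : E →L[ℝ] E)‖₊ = 1 :=
        NNReal.eq (ContinuousLinearMap.norm_id (𝕜 := ℝ) (E := E))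
      rw [this, inv_one, ← NNReal.coe_lt_coe, NNReal.coe_mul, Real.coe_toNNReal t ht0.le]
      push_cast
      nlinarith
    have hinj : Function.Injective g := injOn_univ.1 (happrox.injOn (.inr hsmall))
    have hsurj : Function.Surjective g := happrox.surjective (.inr hsmall)
    have hfix : ∀ x, x ∉ closedBall (0 : E) R → g x = x := fun x hx ↦ by simp [g, hzero x hx]
    have himage : g '' closedBall 0 R = closedBall 0 R := by
      rw [← compl_inj_iff, ← image_compl_eq ⟨hinj, hsurj⟩]
      exact (image_congr hfix).trans (image_id' _)
    have hcv := integral_image_eq_integral_abs_det_fderiv_smul μ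
      (measurableSet_closedBall (x := (0 : E)) (ε := R))
      (fun x _ ↦ (hg' x).hasFDerivWithinAt) hinj.injOn (fun _ ↦ (1 : ℝ))
    rw [himage] at hcv
    have hone : ∫ _ in closedBall (0 : E) R, (1 : ℝ) ∂μ = μ.real (closedBall 0 R) := by simp
    rw [← hone, hcv]
    refine integral_congr_ae (.of_forall fun x ↦ ?_)
    have hlt : ‖t • fderiv ℝ h x‖ < η := by
      have := norm_fderiv_le_of_lipschitz ℝ hC (x₀ := x)
      rw [norm_smul, Real.norm_eq_abs, abs_of_pos ht0]
      nlinarith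
    simp only [smul_eq_mul, mul_one]
    rw [abs_of_pos (hpos _ hlt)]
  have hsupp : ∀ x, x ∉ closedBall (0 : E) R → (fderiv ℝ h x).det = 0 := by
    intro x hx
    have : fderiv ℝ h x = 0 := image_eq_zero_of_notMem_tsupport fun hx' ↦
      hx (hR (tsupport_fderiv_subset ℝ hx'))
    rw [this]
    simp [ContinuousLinearMap.det]
  rw [← setIntegral_eq_integral_of_forall_compl_eq_zero hsupp]
  rw [integral_congr_ae (.of_forall fun x ↦ hdet (fderiv ℝ h x))]
  rw [integral_finsetSum]
  · simp_rw [integral_mul_const]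
    rw [Finset.sum_congr rfl fun t ht ↦ by rw [hvol t ht], ← Finset.mul_sum, hsum, mul_zero]
  · intro t _
    refine ContinuousOn.integrableOn_compact (isCompact_closedBall 0 R) (Continuous.continuousOn ?_)
    exact (ContinuousLinearMap.continuous_det.comp
      (continuous_const.add (hcont.const_smul t))).mul continuous_const

/-- A continuous function is integrable on bounded sets. -/
theorem Continuous.integrableOn_of_isBounded {G : Type*} [NormedAddCommGroup G] {g : E → G}
    (hg : Continuous g) {s : Set E} (hs : Bornology.IsBounded s) : IntegrableOn g s μ :=
  (hg.continuousOn.integrableOn_compact hs.isCompact_closure).mono_set subset_closure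

/-- Near a regular value `p`, the pullback integral `∫ g (f x) det Df(x)` is the signed count of
the fiber over `p` times the integral of `g`. -/
theorem exists_setIntegral_comp_mul_det_fderiv_eq {f : E → E} (hf : ContDiff ℝ 1 f) {Ω : Set E}
    (hΩo : IsOpen Ω) (hΩb : Bornology.IsBounded Ω) {p : E} (hp : p ∉ f '' frontier Ω)
    (hreg : ∀ x ∈ Ω, f x = p → (fderiv ℝ f x).det ≠ 0) :
    ∃ ε > 0, ∀ g : E → ℝ, Continuous g → (∀ y, y ∉ ball p ε → g y = 0) →
      ∫ x in Ω, g (f x) * (fderiv ℝ f x).det ∂μ =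
        (∑ᶠ x ∈ {x | x ∈ Ω ∧ f x = p}, Real.sign (fderiv ℝ f x).det) * ∫ y, g y ∂μ := by
  have hfin := finite_fiber_of_det_fderiv_ne_zero hf hΩb hp hreg
  set F : Set E := {x | x ∈ Ω ∧ f x = p}
  obtain ⟨V, hV, hVdisj⟩ := hfin.t2_separation
  have hloc : ∀ x ∈ F, ∃ U ⊆ V x ∩ Ω, IsOpen U ∧ x ∈ U ∧ InjOn f U ∧ f '' U ∈ 𝓝 (f x) ∧
      ∀ z ∈ U, |(fderiv ℝ f z).det| = Real.sign (fderiv ℝ f x).det * (fderiv ℝ f z).det :=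
    fun x hx ↦ exists_isOpen_injOn_sign_det_eq hf (hreg x hx.1 hx.2)
      (inter_mem ((hV x).2.mem_nhds (hV x).1) (hΩo.mem_nhds hx.1))
  choose! U hUsub hUo hxU hinj hnhds hsign using hloc
  have hUΩ : ⋃ x ∈ F, U x ⊆ Ω := iUnion₂_subset fun x hx ↦ (hUsub x hx).trans inter_subset_right
  have hUopen : IsOpen (⋃ x ∈ F, U x) := isOpen_biUnion hUo
  have hK : IsCompact (closure Ω \ ⋃ x ∈ F, U x) := hΩb.isCompact_closure.diff hUopen
  have hpK : p ∉ f '' (closure Ω \ ⋃ x ∈ F, U x) := by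
    rintro ⟨x, ⟨hx, hxU'⟩, hfx⟩
    by_cases hxΩ : x ∈ Ω
    · exact hxU' (mem_biUnion (show x ∈ F from ⟨hxΩ, hfx⟩) (hxU x ⟨hxΩ, hfx⟩))
    · exact hp ⟨x, ⟨hx, fun hi ↦ hxΩ (interior_subset hi)⟩, hfx⟩
  have hnear : (f '' (closure Ω \ ⋃ x ∈ F, U x))ᶜ ∩ ⋂ x ∈ F, f '' U x ∈ 𝓝 p := by
    refine inter_mem ((hK.image hf.continuous).isClosed.isOpen_compl.mem_nhds hpK) ?_
    exact (biInter_mem hfin).2 fun x hx ↦ hx.2 ▸ hnhds x hx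
  obtain ⟨ε, hε, hball⟩ := Metric.mem_nhds_iff.1 hnear
  refine ⟨ε, hε, fun g hg hg0 ↦ ?_⟩
  have hcont : Continuous fun x ↦ g (f x) * (fderiv ℝ f x).det :=
    (hg.comp hf.continuous).mul
      (ContinuousLinearMap.continuous_det.comp (hf.continuous_fderiv one_ne_zero))
  have hoff : ∀ x ∈ Ω \ ⋃ x ∈ F, U x, g (f x) * (fderiv ℝ f x).det = 0 := fun x hx ↦ by
    rw [hg0 (f x) fun hfx ↦ (hball hfx).1 ⟨x, ⟨subset_closure hx.1, hx.2⟩, rfl⟩, zero_mul]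
  rw [setIntegral_eq_of_subset_of_forall_sdiff_eq_zero hΩo.measurableSet hUΩ hoff]
  have hpiece : ∀ x ∈ F, ∫ z in U x, g (f z) * (fderiv ℝ f z).det ∂μ =
      Real.sign (fderiv ℝ f x).det * ∫ y, g y ∂μ := by
    intro x hx
    have hcv := integral_image_eq_integral_abs_det_fderiv_smul μ (hUo x hx).measurableSet
      (fun z _ ↦ ((hf.differentiable one_ne_zero) z).hasFDerivAt.hasFDerivWithinAt) (hinj x hx) g
    rw [setIntegral_eq_integral_of_forall_compl_eq_zero fun y hy ↦ hg0 y fun hyb ↦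
      hy (mem_iInter₂.1 (hball hyb).2 x hx)] at hcv
    rw [hcv, ← integral_const_mul]
    refine setIntegral_congr_fun (hUo x hx).measurableSet fun z hz ↦ ?_
    have hsq : Real.sign (fderiv ℝ f x).det * Real.sign (fderiv ℝ f x).det = 1 := by
      rcases Real.sign_apply_eq_of_ne_zero _ (hreg x hx.1 hx.2) with h | h <;> rw [h] <;> norm_num
    simp only [smul_eq_mul, hsign x hx z hz]
    linear_combination -(g (f z) * (fderiv ℝ f z).det) * hsq
  have hset : ⋃ x ∈ F, U x = ⋃ x ∈ hfin.toFinset, U x := by simp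
  rw [hset, integral_biUnion_finset, finsum_mem_eq_finite_toFinset_sum _ hfin, Finset.sum_mul]
  · exact Finset.sum_congr rfl fun x hx ↦ hpiece x (hfin.mem_toFinset.1 hx)
  · exact fun x hx ↦ (hUo x (hfin.mem_toFinset.1 hx)).measurableSet
  · intro x hx y hy hxy
    rw [hfin.coe_toFinset] at hx hy
    exact (hVdisj hx hy hxy).mono ((hUsub x hx).trans inter_subset_left)
      ((hUsub y hy).trans inter_subset_left)
  · intro x hx
    exact (hcont.integrableOn_of_isBounded μ hΩb).mono_set
      ((hUsub x (hfin.mem_toFinset.1 hx)).trans inter_subset_right)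

/-- If the support of `φ` misses `f(∂Ω)`, the pullback of a directional derivative of `φ`
integrates to zero against the Jacobian determinant of `f`. -/
theorem setIntegral_fderiv_comp_mul_det_fderiv_eq_zero [Nontrivial E] {f : E → E}
    (hf : ContDiff ℝ 1 f) {Ω : Set E} (hΩo : IsOpen Ω) (hΩb : Bornology.IsBounded Ω)
    {φ : E → ℝ} (hφ : ContDiff ℝ 1 φ) (hsupp : Disjoint (tsupport φ) (f '' frontier Ω)) (v : E) :
    ∫ x in Ω, fderiv ℝ φ (f x) v * (fderiv ℝ f x).det ∂μ = 0 := by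
  have hfd : Differentiable ℝ f := hf.differentiable one_ne_zero
  let ψ : E → ℝ := Ω.indicator (φ ∘ f)
  have hψ_mem : ∀ x ∈ Ω, ψ =ᶠ[𝓝 x] φ ∘ f := fun x hx ↦
    (eqOn_indicator (f := φ ∘ f)).eventuallyEq_of_mem (hΩo.mem_nhds hx)
  have hψ_notMem : ∀ x ∉ Ω, ψ =ᶠ[𝓝 x] 0 := by
    intro x hx
    by_cases hxc : x ∈ closure Ω
    · have hfx : f x ∉ tsupport φ := fun h ↦ disjoint_left.1 hsupp h
        ⟨x, ⟨hxc, fun hi ↦ hx (interior_subset hi)⟩, rfl⟩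
      filter_upwards [hf.continuous.continuousAt.eventually
        (notMem_tsupport_iff_eventuallyEq.1 hfx)] with z hz
      exact indicator_apply_eq_zero.2 fun _ ↦ hz
    · filter_upwards [isClosed_closure.isOpen_compl.mem_nhds hxc] with z hz
      exact indicator_of_notMem (fun h ↦ hz (subset_closure h)) _
  have hψ : ContDiff ℝ 1 ψ := by
    refine contDiff_iff_contDiffAt.2 fun x ↦ ?_
    by_cases hx : x ∈ Ω
    · exact (hφ.comp hf).contDiffAt.congr_of_eventuallyEq (hψ_mem x hx)
    · exact contDiffAt_const.congr_of_eventuallyEq (hψ_notMem x hx)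
  have hψc : HasCompactSupport ψ :=
    HasCompactSupport.intro hΩb.isCompact_closure fun x hx ↦
      indicator_of_notMem (fun h ↦ hx (subset_closure h)) _
  obtain ⟨R, hR0, hR⟩ := hΩb.subset_ball_lt 0 0
  let χ : ContDiffBump (0 : E) := ⟨R, R + 1, hR0, by linarith⟩
  let h₀ : E → E := fun x ↦ χ x • f x
  let h₁ : E → E := fun x ↦ h₀ x + ψ x • v
  have hh₀ : ContDiff ℝ 1 h₀ := χ.contDiff.smul hf
  have hh₁ : ContDiff ℝ 1 h₁ := hh₀.add (hψ.smul contDiff_const)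
  have hc₀ : HasCompactSupport h₀ := χ.hasCompactSupport.smul_right
  have hc₁ : HasCompactSupport h₁ := hc₀.add hψc.smul_right
  have hdiff : ∀ x, (fderiv ℝ h₁ x).det - (fderiv ℝ h₀ x).det =
      Ω.indicator (fun x ↦ fderiv ℝ φ (f x) v * (fderiv ℝ f x).det) x := by
    intro x
    by_cases hx : x ∈ Ω
    · have he₀ : h₀ =ᶠ[𝓝 x] f := by
        filter_upwards [χ.eventuallyEq_one_of_mem_ball (hR hx)] with z hz
        simp [h₀, hz]
      have he₁ : h₁ =ᶠ[𝓝 x] fun z ↦ f z + φ (f z) • v := by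
        filter_upwards [he₀, hψ_mem x hx] with z hz hz'
        simp [h₁, hz, hz']
      have hφf : HasFDerivAt (fun z ↦ φ (f z)) ((fderiv ℝ φ (f x)).comp (fderiv ℝ f x)) x :=
        (hφ.differentiable one_ne_zero (f x)).hasFDerivAt.comp x (hfd x).hasFDerivAt
      have hd₁ : ((fderiv ℝ h₁ x : E →L[ℝ] E) : E →ₗ[ℝ] E) =
          LinearMap.transvection (fderiv ℝ φ (f x) : E →ₗ[ℝ] ℝ) v ∘ₗ
            (fderiv ℝ f x : E →ₗ[ℝ] E) := by
        rw [he₁.fderiv_eq, ((hfd x).hasFDerivAt.fun_add (hφf.smul_const v)).fderiv]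
        ext w
        simp [LinearMap.transvection.apply]
      rw [indicator_of_mem hx, he₀.fderiv_eq, ContinuousLinearMap.det, hd₁, LinearMap.det_comp,
        LinearMap.transvection.det, ContinuousLinearMap.det]
      simp only [ContinuousLinearMap.coe_coe]
      ring
    · have he : h₁ =ᶠ[𝓝 x] h₀ := by
        filter_upwards [hψ_notMem x hx] with z hz
        simp [h₁, hz]
      rw [indicator_of_notMem hx, he.fderiv_eq, sub_self]
  have hint : ∀ {h : E → E}, ContDiff ℝ 1 h → HasCompactSupport h →
      Integrable (fun x ↦ (fderiv ℝ h x).det) μ := fun {h} hh hc ↦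
    (ContinuousLinearMap.continuous_det.comp
      (hh.continuous_fderiv one_ne_zero)).integrable_of_hasCompactSupport
      ((hc.fderiv ℝ).comp_left (g := fun A : E →L[ℝ] E ↦ A.det) (by simp [ContinuousLinearMap.det]))
  rw [← integral_indicator hΩo.measurableSet, ← integral_congr_ae (.of_forall hdiff),
    integral_sub (hint hh₁ hc₁) (hint hh₀ hc₀),
    integral_det_fderiv_eq_zero_of_hasCompactSupport μ hh₁ hc₁,
    integral_det_fderiv_eq_zero_of_hasCompactSupport μ hh₀ hc₀, sub_zero]

/-- The pullback integral of the translates of `φ` is stationary at every `y` such that the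
support of `φ (· - y)` misses `f(∂Ω)`. -/
theorem hasFDerivAt_setIntegral_comp_sub_mul_det_fderiv [Nontrivial E] {f : E → E}
    (hf : ContDiff ℝ 1 f) {Ω : Set E} (hΩo : IsOpen Ω) (hΩb : Bornology.IsBounded Ω)
    {φ : E → ℝ} (hφ : ContDiff ℝ 1 φ) (hφc : HasCompactSupport φ) {y : E}
    (hsupp : ∀ x ∈ frontier Ω, f x - y ∉ tsupport φ) :
    HasFDerivAt (fun y ↦ ∫ x in Ω, φ (f x - y) * (fderiv ℝ f x).det ∂μ) (0 : E →L[ℝ] ℝ) y := by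
  have hdet : Continuous fun x ↦ (fderiv ℝ f x).det :=
    ContinuousLinearMap.continuous_det.comp (hf.continuous_fderiv one_ne_zero)
  have hφ' : Continuous (fderiv ℝ φ) := hφ.continuous_fderiv one_ne_zero
  obtain ⟨C, hC⟩ := (hφc.fderiv ℝ).exists_bound_of_continuous hφ'
  let F' : E → E → E →L[ℝ] ℝ := fun z x ↦ -((fderiv ℝ f x).det • fderiv ℝ φ (f x - z))
  have hF'cont : ∀ z, Continuous (F' z) := fun z ↦
    (hdet.smul (hφ'.comp (hf.continuous.sub continuous_const))).neg
  have hcont : ∀ z, Continuous fun x ↦ φ (f x - z) * (fderiv ℝ f x).det := fun z ↦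
    (hφ.continuous.comp (hf.continuous.sub continuous_const)).mul hdet
  have hmain := hasFDerivAt_integral_of_dominated_of_fderiv_le (μ := μ.restrict Ω) (x₀ := y)
    (F := fun z x ↦ φ (f x - z) * (fderiv ℝ f x).det) (F' := F')
    (bound := fun x ↦ |(fderiv ℝ f x).det| * C) univ_mem
    (.of_forall fun z ↦ ((hcont z).integrableOn_of_isBounded μ hΩb).aestronglyMeasurable)
    ((hcont y).integrableOn_of_isBounded μ hΩb)
    ((hF'cont y).integrableOn_of_isBounded μ hΩb).aestronglyMeasurable
    (.of_forall fun x z _ ↦ by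
      simp only [F', norm_neg, norm_smul, Real.norm_eq_abs]
      gcongr
      exact hC _)
    ((hdet.abs.mul continuous_const).integrableOn_of_isBounded μ hΩb)
    (.of_forall fun x z _ ↦ by
      have h1 : HasFDerivAt (fun z ↦ f x - z) (-ContinuousLinearMap.id ℝ E) z :=
        (hasFDerivAt_id z).const_sub (f x)
      have h2 := ((hφ.differentiable one_ne_zero (f x - z)).hasFDerivAt.comp z h1).mul_const
        (fderiv ℝ f x).det
      refine h2.congr_fderiv ?_
      ext w
      simp [F'])
  refine hmain.congr_fderiv ?_
  ext v
  rw [ContinuousLinearMap.integral_apply ((hF'cont y).integrableOn_of_isBounded μ hΩb)]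
  have hzero := setIntegral_fderiv_comp_mul_det_fderiv_eq_zero μ hf hΩo hΩb
    (φ := fun w ↦ φ (w - y)) (hφ.comp (contDiff_id.sub contDiff_const)) (by
      rw [disjoint_left]
      rintro _ hw ⟨x, hx, rfl⟩
      exact hsupp x hx (tsupport_comp_subset_preimage φ (continuous_id.sub continuous_const) hw)) v
  simp only [fderiv_comp_sub] at hzero
  simp only [F', neg_apply, smul_apply, smul_eq_mul,
    integral_neg, zero_apply, mul_comm (fderiv ℝ f _).det, hzero, neg_zero]

end DegreeIntegral

/-- The signed count of the fibers over regular values is constant on the path components of the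
complement of `f(∂Ω)`. -/
theorem finsum_sign_det_fderiv_eq_of_joinedIn {E : Type*} [NormedAddCommGroup E]
    [NormedSpace ℝ E] [FiniteDimensional ℝ E] [Nontrivial E] {f : E → E}
    (hf : ContDiff ℝ 1 f) {Ω : Set E} (hΩo : IsOpen Ω) (hΩb : Bornology.IsBounded Ω) {p q : E}
    (hpq : JoinedIn (f '' frontier Ω)ᶜ p q)
    (hregp : ∀ x ∈ Ω, f x = p → (fderiv ℝ f x).det ≠ 0)
    (hregq : ∀ x ∈ Ω, f x = q → (fderiv ℝ f x).det ≠ 0) :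
    ∑ᶠ x ∈ {x | x ∈ Ω ∧ f x = p}, Real.sign (fderiv ℝ f x).det
      = ∑ᶠ x ∈ {x | x ∈ Ω ∧ f x = q}, Real.sign (fderiv ℝ f x).det := by
  borelize E
  let μ : Measure E := Measure.addHaar
  obtain ⟨εp, hεp, hIp⟩ :=
    exists_setIntegral_comp_mul_det_fderiv_eq μ hf hΩo hΩb hpq.source_mem hregp
  obtain ⟨εq, hεq, hIq⟩ :=
    exists_setIntegral_comp_mul_det_fderiv_eq μ hf hΩo hΩb hpq.target_mem hregq
  obtain ⟨γ, hγ⟩ := hpq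
  have hfr : IsCompact (f '' frontier Ω) :=
    (hΩb.isCompact_closure.of_isClosed_subset isClosed_frontier frontier_subset_closure).image
      hf.continuous
  obtain ⟨δ, hδ, hthick⟩ := (isCompact_range γ.continuous).exists_cthickening_subset_open
    hfr.isClosed.isOpen_compl (range_subset_iff.2 hγ)
  let r : ℝ := min (δ / 2) (min εp εq)
  have hr : 0 < r := by positivity
  let φ : ContDiffBump (0 : E) := ⟨r / 2, r, by positivity, by linarith⟩
  let S : Set E := thickening (δ / 2) (range γ)
  have hγS : range γ ⊆ S := self_subset_thickening (by positivity) _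
  have hderiv : ∀ y ∈ S, HasFDerivAt
      (fun y ↦ ∫ x in Ω, φ (f x - y) * (fderiv ℝ f x).det ∂μ) (0 : E →L[ℝ] ℝ) y := by
    intro y hy
    refine hasFDerivAt_setIntegral_comp_sub_mul_det_fderiv μ hf hΩo hΩb φ.contDiff
      φ.hasCompactSupport fun x hx hmem ↦ ?_
    rw [φ.tsupport_eq, mem_closedBall_zero_iff, ← dist_eq_norm] at hmem
    obtain ⟨z, hz, hyz⟩ := mem_thickening_iff.1 hy
    refine hthick (mem_cthickening_of_dist_le (f x) z δ _ hz ?_) (mem_image_of_mem f hx)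
    have := dist_triangle (f x) y z
    have : r ≤ δ / 2 := min_le_left _ _
    have : φ.rOut = r := rfl
    linarith
  have hp : p ∈ range γ := ⟨0, γ.source⟩
  have hq : q ∈ range γ := ⟨1, γ.target⟩
  have hconn : IsPreconnected (range γ) := isPreconnected_range γ.continuous
  have hcomp : connectedComponentIn S p ⊆ S := connectedComponentIn_subset S p
  have heq := (isOpen_thickening.connectedComponentIn (F := S) (x := p)).is_const_of_fderiv_eq_zero
    (𝕜 := ℝ) isPreconnected_connectedComponentIn
    (fun y hy ↦ (hderiv y (hcomp hy)).differentiableAt.differentiableWithinAt)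
    (fun y hy ↦ (hderiv y (hcomp hy)).fderiv)
    (mem_connectedComponentIn (hγS hp)) (hconn.subset_connectedComponentIn hp hγS hq)
  have htrans : ∀ y ε, r ≤ ε → ∀ w, w ∉ ball y ε → φ (w - y) = 0 := fun y ε hε w hw ↦
    φ.zero_of_le_dist (by
      rw [mem_ball, not_lt, dist_eq_norm] at hw
      simpa using hε.trans hw)
  have hcont : ∀ y, Continuous fun w ↦ φ (w - y) := fun y ↦
    φ.continuous.comp (continuous_id.sub continuous_const)
  have hIp' := hIp _ (hcont p) (htrans p εp ((min_le_right _ _).trans (min_le_left _ _)))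
  have hIq' := hIq _ (hcont q) (htrans q εq ((min_le_right _ _).trans (min_le_right _ _)))
  rw [integral_sub_right_eq_self (fun w ↦ φ w)] at hIp' hIq'
  beta_reduce at heq
  rw [hIp', hIq'] at heq
  exact mul_right_cancel₀ (φ.integral_pos (μ := μ)).ne' heq

/-- **Constancy of the signed crossing count (degree) on components of the complement of the
boundary image.** For a `C¹` map `f : ℝⁿ → ℝⁿ` and a bounded open set `Ω`, if `p, q` avoid
`f(∂Ω)`, lie in the same path-component of its complement, and are regular values of `f` on
the closure of `Ω`, then the fibers `f⁻¹{p} ∩ Ω` and `f⁻¹{q} ∩ Ω` are finite and have equal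
signed counts `Σ sgn(det Df)`. -/
theorem degree_constant_on_components (n : ℕ) (hn : 1 ≤ n)
    (f : (Fin n → ℝ) → (Fin n → ℝ)) (hf : ContDiff ℝ 1 f)
    (Ω : Set (Fin n → ℝ)) (hΩo : IsOpen Ω) (hΩb : Bornology.IsBounded Ω)
    (p q : Fin n → ℝ)
    (hp : p ∉ f '' frontier Ω) (hq : q ∉ f '' frontier Ω)
    (hpq : JoinedIn (f '' frontier Ω)ᶜ p q)
    (hreg : ∀ x ∈ closure Ω, f x = p ∨ f x = q → (fderiv ℝ f x).det ≠ 0) :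
    {x | x ∈ Ω ∧ f x = p}.Finite ∧ {x | x ∈ Ω ∧ f x = q}.Finite ∧
    ∑ᶠ x ∈ {x | x ∈ Ω ∧ f x = p}, Real.sign (fderiv ℝ f x).det
      = ∑ᶠ x ∈ {x | x ∈ Ω ∧ f x = q}, Real.sign (fderiv ℝ f x).det := by
  have : Nonempty (Fin n) := ⟨⟨0, hn⟩⟩
  have hregp : ∀ x ∈ Ω, f x = p → (fderiv ℝ f x).det ≠ 0 := fun x hx h ↦
    hreg x (subset_closure hx) (.inl h)
  have hregq : ∀ x ∈ Ω, f x = q → (fderiv ℝ f x).det ≠ 0 := fun x hx h ↦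
    hreg x (subset_closure hx) (.inr h)
  exact ⟨finite_fiber_of_det_fderiv_ne_zero hf hΩb hp hregp,
    finite_fiber_of_det_fderiv_ne_zero hf hΩb hq hregq,
    finsum_sign_det_fderiv_eq_of_joinedIn hf hΩo hΩb hpq hregp hregq⟩
end
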